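/- arXiv:1912.05424 — 2 statements merged into one kernel-verified Lean document; each statement's English description precedes it below -/
import Mathlib

section
/- Let K be a field and n ≥ 3. Then SL_n(K[x_1,…,x_m]) = E_n(K[x_1,…,x_m]) for every m ≥ 0; in particular K_1^{SL_n}(K) = K_1^{SL_n}(K[x_1,…,x_m]) is trivial. -/
/-- The elementary subgroup `E_n(R) ⊆ SL_n(R)`. -/
def elemSL (n : ℕ) (R : Type*) [CommRing R] :
    Subgroup (Matrix.SpecialLinearGroup (Fin n) R) :=
  Subgroup.closure {g | ∃ (i j : Fin n) (a : R), i ≠ j ∧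
    (g : Matrix (Fin n) (Fin n) R) = Matrix.transvection i j a}

set_option linter.all false
set_option linter.unusedSimpArgs false

open Matrix in
/-- The elementary transvection as an element of `SL_n`. -/
def el {n : ℕ} {R : Type*} [CommRing R] {i j : Fin n} (h : i ≠ j) (a : R) :
    Matrix.SpecialLinearGroup (Fin n) R :=
  ⟨Matrix.transvection i j a, Matrix.det_transvection_of_ne i j h a⟩

theorem el_mem {n : ℕ} {R : Type*} [CommRing R] {i j : Fin n} (h : i ≠ j) (a : R) :
    el h a ∈ elemSL n R :=
  Subgroup.subset_closure ⟨i, j, a, h, rfl⟩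

theorem el_coe {n : ℕ} {R : Type*} [CommRing R] {i j : Fin n} (h : i ≠ j) (a : R) :
    (el h a : Matrix (Fin n) (Fin n) R) = 1 + Matrix.single i j a := rfl

theorem el_zero {n : ℕ} {R : Type*} [CommRing R] {i j : Fin n} (h : i ≠ j) :
    el h (0 : R) = 1 := Subtype.ext (Matrix.transvection_zero i j)

theorem el_add {n : ℕ} {R : Type*} [CommRing R] {i j : Fin n} (h : i ≠ j) (a b : R) :
    el h (a + b) = el h a * el h b :=
  Subtype.ext (Matrix.transvection_mul_transvection_same i j h a b).symm

theorem el_inv {n : ℕ} {R : Type*} [CommRing R] {i j : Fin n} (h : i ≠ j) (a : R) :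
    (el h a)⁻¹ = el h (-a) := by
  rw [inv_eq_iff_mul_eq_one, ← el_add, add_neg_cancel, el_zero]

theorem el_map {n : ℕ} {R S : Type*} [CommRing R] [CommRing S] (f : R →+* S) {i j : Fin n}
    (h : i ≠ j) (a : R) : Matrix.SpecialLinearGroup.map f (el h a) = el h (f a) := by
  ext k l
  simp only [Matrix.SpecialLinearGroup.map_apply_coe, el_coe,
    RingHom.mapMatrix_apply, Matrix.map_apply, Matrix.add_apply, map_add, Matrix.single_apply,
    Matrix.one_apply]
  split_ifs <;> simp

/-- Induction principle for the elementary group. -/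
theorem elem_induction {n : ℕ} {R : Type*} [CommRing R]
    {p : Matrix.SpecialLinearGroup (Fin n) R → Prop}
    (mem : ∀ (i j : Fin n) (h : i ≠ j) (a : R), p (el h a)) (one : p 1)
    (mul : ∀ x y, x ∈ elemSL n R → y ∈ elemSL n R → p x → p y → p (x * y))
    (inv : ∀ x, x ∈ elemSL n R → p x → p x⁻¹) {x} (hx : x ∈ elemSL n R) : p x := by
  refine Subgroup.closure_induction (p := fun g _ => p g) ?_ one (fun x y hx hy => mul x y hx hy)
    (fun x hx => inv x hx) hx
  rintro x ⟨i, j, a, h, hx⟩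
  have : x = el h a := Subtype.ext hx
  rw [this]; exact mem i j h a

theorem elem_map {n : ℕ} {R S : Type*} [CommRing R] [CommRing S] (f : R →+* S)
    {x : Matrix.SpecialLinearGroup (Fin n) R} (hx : x ∈ elemSL n R) :
    Matrix.SpecialLinearGroup.map f x ∈ elemSL n S := by
  refine elem_induction (p := fun x => Matrix.SpecialLinearGroup.map f x ∈ elemSL n S)
    ?_ ?_ ?_ ?_ hx
  · intro i j h a; rw [el_map]; exact el_mem _ _
  · rw [map_one]; exact one_mem _
  · intro x y _ _ h1 h2; rw [map_mul]; exact mul_mem h1 h2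
  · intro x _ h1; rw [map_inv]; exact inv_mem h1

theorem el_comm_same {n : ℕ} {R : Type*} [CommRing R] {i j k l : Fin n} (h : i ≠ j) (h' : k ≠ l)
    (h1 : l ≠ i) (h2 : j ≠ k) (a c : R) :
    el h' c * el h a * (el h' c)⁻¹ = el h a := by
  rw [mul_inv_eq_iff_eq_mul]
  apply Subtype.ext
  simp [el_coe, mul_add, add_mul, h1, h2, add_assoc, add_left_comm, add_comm]

theorem el_conj_left {n : ℕ} {R : Type*} [CommRing R] {j k l : Fin n} (h : l ≠ j) (h' : k ≠ l)
    (h2 : k ≠ j) (a c : R) :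
    el h' c * el h a * (el h' c)⁻¹ = el h2 (c * a) * el h a := by
  rw [mul_inv_eq_iff_eq_mul]
  apply Subtype.ext
  simp [el_coe, mul_add, add_mul, h'.symm, h.symm, h2.symm, add_assoc,
    add_left_comm, add_comm]

theorem el_conj_right {n : ℕ} {R : Type*} [CommRing R] {i k l : Fin n} (h : i ≠ k) (h' : k ≠ l)
    (h2 : i ≠ l) (a c : R) :
    el h' c * el h a * (el h' c)⁻¹ = el h2 (-(a * c)) * el h a := by
  rw [mul_inv_eq_iff_eq_mul]
  apply Subtype.ext
  have e : Matrix.single i l (-(a * c)) = - Matrix.single i l (a * c) := by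
    ext x y; simp [Matrix.single_apply]; split_ifs <;> simp
  simp only [el_coe, mul_add, add_mul, Matrix.SpecialLinearGroup.coe_mul, e,
    neg_mul, one_mul, mul_one, Matrix.single_mul_single_same]
  simp [h2.symm, h.symm, h', h'.symm, h2, h]
  abel

theorem el_commutator {n : ℕ} {R : Type*} [CommRing R] {l p k : Fin n} (h1 : l ≠ p) (h2 : p ≠ k)
    (h : l ≠ k) (a b : R) :
    el h (a * b) = el h1 a * el h2 b * (el h1 a)⁻¹ * (el h2 b)⁻¹ := by
  rw [el_conj_left h2 h1 h, mul_inv_cancel_right]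

/-- The subgroup generated by elementaries with parameter in `φ (t P)`. -/
def NN (n : ℕ) {P Q : Type*} [CommRing P] [CommRing Q] (φ : P →+* Q) (t : P) :
    Subgroup (Matrix.SpecialLinearGroup (Fin n) Q) :=
  Subgroup.closure {g | ∃ (i j : Fin n) (h : i ≠ j) (a : P), g = el h (φ (t * a))}

theorem NN_mem {n : ℕ} {P Q : Type*} [CommRing P] [CommRing Q] (φ : P →+* Q) (t : P)
    {i j : Fin n} (h : i ≠ j) (c : Q) (hc : ∃ a, c = φ (t * a)) : el h c ∈ NN n φ t := by
  obtain ⟨a, rfl⟩ := hc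
  exact Subgroup.subset_closure ⟨i, j, h, a, rfl⟩

theorem NN_one_le {n : ℕ} {P Q : Type*} [CommRing P] [CommRing Q] (φ : P →+* Q) :
    NN n φ 1 ≤ (elemSL n P).map (Matrix.SpecialLinearGroup.map φ) := by
  rw [NN, Subgroup.closure_le]
  rintro g ⟨i, j, h, a, rfl⟩
  refine ⟨el h a, el_mem _ _, ?_⟩
  rw [el_map, one_mul]

theorem exists_third {n : ℕ} (hn : 3 ≤ n) (i j : Fin n) : ∃ p : Fin n, p ≠ i ∧ p ≠ j := by
  by_contra! hcon
  have h1 : (Finset.univ : Finset (Fin n)) ⊆ {i, j} := by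
    intro p _
    by_cases h : p = i
    · simp [h]
    · simp [hcon p h]
  have h2 := Finset.card_le_card h1
  have h3 := Finset.card_le_two (a := i) (b := j)
  simp at h2; omega

theorem NN_conj_el {n : ℕ} (hn : 3 ≤ n) {P Q : Type*} [CommRing P] [CommRing Q] (φ : P →+* Q)
    (S : Submonoid P) (hS : ∀ c : Q, ∃ u ∈ S, ∃ d, φ u * c = φ d)
    {k l : Fin n} (hkl : k ≠ l) (c : Q) (t : P) (ht : t ∈ S) :
    ∃ s ∈ S, ∀ B ∈ NN n φ s, el hkl c * B * (el hkl c)⁻¹ ∈ NN n φ t := by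
  obtain ⟨u, hu, d, hd⟩ := hS c
  refine ⟨(t * u) * (t * u), mul_mem (mul_mem ht hu) (mul_mem ht hu), ?_⟩
  intro B hB
  have key : ∀ {i j : Fin n} (h : i ≠ j) (x : Q), (i ≠ l ∨ j ≠ k) →
      (∃ a, x = φ (t * a)) → (∃ a, c * x = φ (t * a)) →
      el hkl c * el h x * (el hkl c)⁻¹ ∈ NN n φ t := by
    intro i j h x hij hx hcx
    by_cases h1 : l = i
    · subst h1
      have h2 : k ≠ j := by
        rcases hij with h | h
        · exact absurd rfl h
        · exact h.symm
      rw [el_conj_left h hkl h2]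
      exact mul_mem (NN_mem φ t _ _ hcx) (NN_mem φ t _ _ hx)
    · by_cases h2 : j = k
      · subst h2
        rw [el_conj_right h hkl (Ne.symm h1)]
        refine mul_mem (NN_mem φ t _ _ ?_) (NN_mem φ t _ _ hx)
        obtain ⟨a, ha⟩ := hcx
        exact ⟨-a, by rw [mul_comm x c, ha]; simp⟩
      · rw [el_comm_same h hkl h1 h2]
        exact NN_mem φ t _ _ hx
  induction hB using Subgroup.closure_induction with
  | one => simp
  | mul x y _ _ h1 h2 =>
    have : el hkl c * (x * y) * (el hkl c)⁻¹ =
      (el hkl c * x * (el hkl c)⁻¹) * (el hkl c * y * (el hkl c)⁻¹) := by group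
    rw [this]; exact mul_mem h1 h2
  | inv x _ h1 =>
    have : el hkl c * x⁻¹ * (el hkl c)⁻¹ = (el hkl c * x * (el hkl c)⁻¹)⁻¹ := by group
    rw [this]; exact inv_mem h1
  | mem x hx =>
    obtain ⟨i, j, h, a, rfl⟩ := hx
    by_cases hij : i ≠ l ∨ j ≠ k
    · apply key h _ hij
      · exact ⟨u * (t * u) * a, by congr 1; ring⟩
      · refine ⟨d * (t * u) * a, ?_⟩
        simp only [map_mul] at hd ⊢
        linear_combination (φ t * φ t * φ u * φ a) * hd
    · push Not at hij
      obtain ⟨rfl, rfl⟩ := hij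
      obtain ⟨p, hp1, hp2⟩ := exists_third hn i j
      have e : φ (t * u * (t * u) * a) = φ (t * u) * φ (t * u * a) := by
        rw [← map_mul]; congr 1; ring
      rw [e, el_commutator hp1.symm hp2 h]
      set g := el hkl c
      have m1 : g * el hp1.symm (φ (t * u)) * g⁻¹ ∈ NN n φ t := by
        apply key _ _ (Or.inr hp2)
        · exact ⟨u, rfl⟩
        · refine ⟨d, ?_⟩
          simp only [map_mul] at hd ⊢
          linear_combination (φ t) * hd
      have m2 : g * el hp2 (φ (t * u * a)) * g⁻¹ ∈ NN n φ t := by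
        apply key _ _ (Or.inl hp1)
        · exact ⟨u * a, by congr 1; ring⟩
        · refine ⟨d * a, ?_⟩
          simp only [map_mul] at hd ⊢
          linear_combination (φ t * φ a) * hd
      have := mul_mem (mul_mem (mul_mem m1 m2) (inv_mem m1)) (inv_mem m2)
      convert this using 1
      group

theorem NN_conj {n : ℕ} (hn : 3 ≤ n) {P Q : Type*} [CommRing P] [CommRing Q] (φ : P →+* Q)
    (S : Submonoid P) (hS : ∀ c : Q, ∃ u ∈ S, ∃ d, φ u * c = φ d)
    {γ : Matrix.SpecialLinearGroup (Fin n) Q} (hγ : γ ∈ elemSL n Q) :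
    ∀ t ∈ S, ∃ s ∈ S, ∀ B ∈ NN n φ s, γ * B * γ⁻¹ ∈ NN n φ t := by
  have H : ∀ γ ∈ elemSL n Q, (∀ t ∈ S, ∃ s ∈ S, ∀ B ∈ NN n φ s, γ * B * γ⁻¹ ∈ NN n φ t) ∧
      (∀ t ∈ S, ∃ s ∈ S, ∀ B ∈ NN n φ s, γ⁻¹ * B * γ⁻¹⁻¹ ∈ NN n φ t) := by
    intro γ hγ
    refine elem_induction (p := fun γ =>
      (∀ t ∈ S, ∃ s ∈ S, ∀ B ∈ NN n φ s, γ * B * γ⁻¹ ∈ NN n φ t) ∧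
      (∀ t ∈ S, ∃ s ∈ S, ∀ B ∈ NN n φ s, γ⁻¹ * B * γ⁻¹⁻¹ ∈ NN n φ t)) ?_ ?_ ?_ ?_ hγ
    · intro i j h a
      refine ⟨fun t ht => NN_conj_el hn φ S hS h a t ht, fun t ht => ?_⟩
      rw [el_inv]
      exact NN_conj_el hn φ S hS h (-a) t ht
    · exact ⟨fun t ht => ⟨t, ht, by simp⟩, fun t ht => ⟨t, ht, by simp⟩⟩
    · rintro x y _ _ ⟨h1, h1'⟩ ⟨h2, h2'⟩
      constructor
      · intro t ht
        obtain ⟨s, hs, H1⟩ := h1 t ht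
        obtain ⟨r, hr, H2⟩ := h2 s hs
        refine ⟨r, hr, fun B hB => ?_⟩
        have := H1 _ (H2 B hB)
        convert this using 1
        group
      · intro t ht
        obtain ⟨s, hs, H1⟩ := h2' t ht
        obtain ⟨r, hr, H2⟩ := h1' s hs
        refine ⟨r, hr, fun B hB => ?_⟩
        have := H1 _ (H2 B hB)
        convert this using 1
        group
    · rintro x _ ⟨h1, h1'⟩
      exact ⟨h1', by simpa using h1⟩
  exact (H γ hγ).1

theorem SLmap_comp {n : ℕ} {R S T : Type*} [CommRing R] [CommRing S] [CommRing T] (f : S →+* T)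
    (g : R →+* S) (x : Matrix.SpecialLinearGroup (Fin n) R) :
    Matrix.SpecialLinearGroup.map f (Matrix.SpecialLinearGroup.map g x) =
      Matrix.SpecialLinearGroup.map (f.comp g) x := rfl

theorem den_poly {R L : Type*} [CommRing R] [CommRing L] (φ : R →+* L) (S : Submonoid R)
    (hS : ∀ c : L, ∃ u ∈ S, ∃ d, φ u * c = φ d) (c : Polynomial L) :
    ∃ u ∈ S.map (Polynomial.C : R →+* Polynomial R), ∃ d,
      Polynomial.mapRingHom φ u * c = Polynomial.mapRingHom φ d := by
  induction c using Polynomial.induction_on' with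
  | add p q hp hq =>
    obtain ⟨u, hu, d, hd⟩ := hp
    obtain ⟨u', hu', d', hd'⟩ := hq
    refine ⟨u * u', mul_mem hu hu', u' * d + u * d', ?_⟩
    simp only [map_mul, map_add]
    linear_combination (Polynomial.mapRingHom φ u') * hd + (Polynomial.mapRingHom φ u) * hd'
  | monomial k a =>
    obtain ⟨u, hu, d, hd⟩ := hS a
    refine ⟨Polynomial.C u, ⟨u, hu, rfl⟩, Polynomial.monomial k d, ?_⟩
    simp [Polynomial.C_mul_monomial, hd]

/-- The substitution `Y ↦ a Y`. -/
noncomputable def rho {T : Type*} [CommRing T] (a : T) : Polynomial T →+* Polynomial T :=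
  Polynomial.eval₂RingHom Polynomial.C (Polynomial.C a * Polynomial.X)

theorem rho_C {T : Type*} [CommRing T] (a b : T) : rho a (Polynomial.C b) = Polynomial.C b := by
  simp [rho]

theorem rho_X {T : Type*} [CommRing T] (a : T) :
    rho a (Polynomial.X) = Polynomial.C a * Polynomial.X := by
  simp [rho]

theorem rho_map {T U : Type*} [CommRing T] [CommRing U] (φ : T →+* U) (a : T) (d : Polynomial T) :
    rho (φ a) (Polynomial.mapRingHom φ d) = Polynomial.mapRingHom φ (rho a d) := by
  have : (rho (φ a)).comp (Polynomial.mapRingHom φ) = (Polynomial.mapRingHom φ).comp (rho a) := by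
    apply Polynomial.ringHom_ext
    · intro x; simp [rho_C]
    · simp [rho_X]
  exact congrArg (fun f => f d) this

theorem dil {n : ℕ} (hn : 3 ≤ n) {T U : Type*} [CommRing T] [CommRing U] (φ : T →+* U)
    (S : Submonoid T) (hS : ∀ c : U, ∃ u ∈ S, ∃ d, φ u * c = φ d)
    {B : Matrix.SpecialLinearGroup (Fin n) (Polynomial U)} (hB : B ∈ elemSL n (Polynomial U)) :
    ∀ γ ∈ elemSL n U, ∃ s ∈ S, ∀ t : T,
      Matrix.SpecialLinearGroup.map Polynomial.C γ *
        Matrix.SpecialLinearGroup.map (rho (φ (s * t))) B *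
        (Matrix.SpecialLinearGroup.map (Polynomial.C.comp (Polynomial.evalRingHom 0)) B)⁻¹ *
        (Matrix.SpecialLinearGroup.map Polynomial.C γ)⁻¹ ∈
      (elemSL n (Polynomial T)).map (Matrix.SpecialLinearGroup.map (Polynomial.mapRingHom φ)) := by
  refine elem_induction (p := fun B => ∀ γ ∈ elemSL n U, ∃ s ∈ S, ∀ t : T,
      Matrix.SpecialLinearGroup.map Polynomial.C γ *
        Matrix.SpecialLinearGroup.map (rho (φ (s * t))) B *
        (Matrix.SpecialLinearGroup.map (Polynomial.C.comp (Polynomial.evalRingHom 0)) B)⁻¹ *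
        (Matrix.SpecialLinearGroup.map Polynomial.C γ)⁻¹ ∈
      (elemSL n (Polynomial T)).map (Matrix.SpecialLinearGroup.map (Polynomial.mapRingHom φ)))
      ?_ ?_ ?_ ?_ hB
  · intro i j h f γ hγ
    obtain ⟨_, ⟨u, hu, rfl⟩, d, hd⟩ := den_poly φ S hS f.divX
    obtain ⟨_, ⟨s, hs, rfl⟩, hN⟩ := NN_conj hn (Polynomial.mapRingHom φ)
      (S.map (Polynomial.C : T →+* Polynomial T)) (den_poly φ S hS)
      (elem_map Polynomial.C hγ) 1 (one_mem _)
    refine ⟨s * u, mul_mem hs hu, fun t => ?_⟩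
    apply NN_one_le
    rw [el_map, el_map, el_inv, mul_assoc (Matrix.SpecialLinearGroup.map Polynomial.C γ), ← el_add]
    apply hN
    apply NN_mem
    refine ⟨Polynomial.C t * Polynomial.X * rho (s * u * t) d, ?_⟩
    have hd' := congrArg (rho (φ (s * u * t))) hd
    rw [rho_map] at hd'
    simp only [map_mul] at hd' ⊢
    rw [← hd']
    conv_lhs => rw [← Polynomial.divX_mul_X_add f]
    simp [rho_C, rho_X]
    ring
  · intro γ _
    exact ⟨1, one_mem _, fun t => by simp [one_mem]⟩
  · intro x y hx hy h1 h2 γ hγ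
    obtain ⟨s1, hs1, H1⟩ := h1 γ hγ
    obtain ⟨s2, hs2, H2⟩ := h2 _ (mul_mem hγ (elem_map (Polynomial.evalRingHom 0) hx))
    refine ⟨s1 * s2, mul_mem hs1 hs2, fun t => ?_⟩
    have e1 := H1 (s2 * t)
    have e2 := H2 (s1 * t)
    rw [map_mul, SLmap_comp] at e2
    rw [show s1 * (s2 * t) = s1 * s2 * t by ring] at e1
    rw [show s2 * (s1 * t) = s1 * s2 * t by ring] at e2
    convert mul_mem e1 e2 using 1
    simp only [map_mul]
    group
  · intro x hx h1 γ hγ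
    obtain ⟨s1, hs1, H1⟩ := h1 _
      (mul_mem hγ (inv_mem (elem_map (Polynomial.evalRingHom 0) hx)))
    refine ⟨s1, hs1, fun t => ?_⟩
    have e1 := H1 t
    rw [map_mul, map_inv, SLmap_comp] at e1
    convert inv_mem e1 using 1
    simp only [map_inv]
    group

/-- The substitution `X ↦ X + c Y`, from `R[X]` to `R[X][Y]`. -/
noncomputable def sig {R : Type*} [CommRing R] (c : R) :
    Polynomial R →+* Polynomial (Polynomial R) :=
  Polynomial.eval₂RingHom (Polynomial.C.comp Polynomial.C)
    (Polynomial.C Polynomial.X + Polynomial.C (Polynomial.C c) * Polynomial.X)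

theorem sig_C {R : Type*} [CommRing R] (c r : R) :
    sig c (Polynomial.C r) = Polynomial.C (Polynomial.C r) := by simp [sig]

theorem sig_X {R : Type*} [CommRing R] (c : R) :
    sig c Polynomial.X =
      Polynomial.C Polynomial.X + Polynomial.C (Polynomial.C c) * Polynomial.X := by
  simp [sig]

theorem coe_SLmap {n : ℕ} {R S : Type*} [CommRing R] [CommRing S] (f : R →+* S)
    (x : Matrix.SpecialLinearGroup (Fin n) R) :
    (Matrix.SpecialLinearGroup.map f x : Matrix (Fin n) (Fin n) S) =
      (x : Matrix (Fin n) (Fin n) R).map f := rfl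

theorem hom_ext2 {R S : Type*} [CommRing R] [CommRing S] {f g : Polynomial R →+* S}
    (h : ∀ r, f (Polynomial.C r) = g (Polynomial.C r)) (h' : f Polynomial.X = g Polynomial.X) :
    f = g := Polynomial.ringHom_ext h h'

/-- The ideal used in patching. -/
noncomputable def patchIdeal {R : Type*} [CommRing R] {n : ℕ} {ι : Type*}
    (A : Matrix (Fin n) ι (Polynomial R)) : Ideal R where
  carrier := {c | ∃ E ∈ elemSL n (Polynomial (Polynomial R)), A.map (sig c) =
    (E : Matrix (Fin n) (Fin n) (Polynomial (Polynomial R))) * A.map Polynomial.C}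
  zero_mem' := by
    refine ⟨1, one_mem _, ?_⟩
    have : sig (0 : R) = Polynomial.C := hom_ext2 (by simp [sig_C]) (by simp [sig_X])
    rw [this]; simp
  add_mem' := by
    rintro c c' ⟨E, hE, h⟩ ⟨E', hE', h'⟩
    let τ : Polynomial (Polynomial R) →+* Polynomial (Polynomial R) :=
      Polynomial.eval₂RingHom (sig c) Polynomial.X
    refine ⟨Matrix.SpecialLinearGroup.map τ E' * E, mul_mem (elem_map τ hE') hE, ?_⟩
    have e1 : τ.comp (sig c') = sig (c + c') := by
      apply hom_ext2
      · simp [τ, sig_C]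
      · simp [τ, sig_X, sig_C]; ring
    have e2 : τ.comp Polynomial.C = sig c := by
      exact RingHom.ext fun x => by simp [τ]
    have := congrArg (fun M => M.map τ) h'
    simp only [Matrix.map_mul, Matrix.map_map] at this
    rw [Matrix.SpecialLinearGroup.coe_mul, Matrix.mul_assoc, ← h, coe_SLmap, ← e1, ← e2]
    exact this
  smul_mem' := by
    rintro r c ⟨E, hE, h⟩
    refine ⟨Matrix.SpecialLinearGroup.map (rho (Polynomial.C r)) E, elem_map _ hE, ?_⟩
    have e1 : (rho (Polynomial.C r)).comp (sig c) = sig (r * c) := by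
      apply hom_ext2
      · simp [sig_C, rho_C]
      · simp [sig_X, rho_C, rho_X]; ring
    have e2 : (rho (Polynomial.C r)).comp Polynomial.C = Polynomial.C := by
      exact RingHom.ext fun x => by simp [rho_C]
    have := congrArg (fun M => M.map (rho (Polynomial.C r))) h
    simp only [Matrix.map_mul, Matrix.map_map] at this
    rw [coe_SLmap, smul_eq_mul, ← e1, ← e2]
    exact this

theorem mem_patchIdeal {R : Type*} [CommRing R] {n : ℕ} {ι : Type*}
    (A : Matrix (Fin n) ι (Polynomial R)) (c : R) : c ∈ patchIdeal A ↔
    ∃ E ∈ elemSL n (Polynomial (Polynomial R)), A.map (sig c) =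
    (E : Matrix (Fin n) (Fin n) (Polynomial (Polynomial R))) * A.map Polynomial.C := Iff.rfl

theorem patch_local {R L : Type*} [CommRing R] [CommRing L] {n : ℕ} (hn : 3 ≤ n) {ι : Type*}
    (A : Matrix (Fin n) ι (Polynomial R)) (φ : R →+* L) (hinj : Function.Injective φ)
    (S : Submonoid R) (hS : ∀ c : L, ∃ u ∈ S, ∃ d, φ u * c = φ d)
    (M : Matrix.SpecialLinearGroup (Fin n) (Polynomial L)) (hM : M ∈ elemSL n (Polynomial L))
    (A0 : Matrix (Fin n) ι L)
    (hMA : A.map (Polynomial.mapRingHom φ) =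
          (M : Matrix (Fin n) (Fin n) (Polynomial L)) * A0.map Polynomial.C) :
    ∃ s ∈ S, s ∈ patchIdeal A := by
  set B := Matrix.SpecialLinearGroup.map (sig (1 : L)) M *
    (Matrix.SpecialLinearGroup.map Polynomial.C M)⁻¹ with hBdef
  have hB : B ∈ elemSL n (Polynomial (Polynomial L)) :=
    mul_mem (elem_map _ hM) (inv_mem (elem_map _ hM))
  obtain ⟨_, ⟨s, hs, rfl⟩, H⟩ := dil hn (Polynomial.mapRingHom φ)
    (S.map (Polynomial.C : R →+* Polynomial R)) (den_poly φ _ hS) hB 1 (one_mem _)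
  have hB0 : Matrix.SpecialLinearGroup.map (Polynomial.evalRingHom 0) B = 1 := by
    have e1 : (Polynomial.evalRingHom (0 : Polynomial L)).comp (sig (1 : L)) = RingHom.id _ := by
      apply hom_ext2 <;> simp [sig_C, sig_X]
    have e2 : (Polynomial.evalRingHom (0 : Polynomial L)).comp Polynomial.C = RingHom.id _ :=
      RingHom.ext fun x => by simp
    rw [hBdef, map_mul, map_inv, SLmap_comp, SLmap_comp, e1, e2, mul_inv_cancel]
  obtain ⟨E, hE, hEB⟩ := H 1
  rw [← SLmap_comp, hB0] at hEB
  simp only [map_one, inv_one, one_mul, mul_one] at hEB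
  refine ⟨s, hs, (mem_patchIdeal A s).2 ⟨E, hE, ?_⟩⟩
  set φ2 := Polynomial.mapRingHom (Polynomial.mapRingHom φ)
  have hinj2 : Function.Injective φ2 :=
    Polynomial.map_injective _ (Polynomial.map_injective _ hinj)
  refine Matrix.map_injective hinj2 ?_
  have c1 : φ2.comp (sig s) = (sig (φ s)).comp (Polynomial.mapRingHom φ) := by
    apply hom_ext2 <;> simp [φ2, sig_C, sig_X]
  have c2 : φ2.comp Polynomial.C = Polynomial.C.comp (Polynomial.mapRingHom φ) :=
    RingHom.ext fun x => by simp [φ2]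
  have c3 : (rho (Polynomial.C (φ s))).comp (sig 1) = sig (φ s) := by
    apply hom_ext2 <;> simp [sig_C, sig_X, rho_C, rho_X]
  have c4 : (rho (Polynomial.C (φ s))).comp Polynomial.C = Polynomial.C :=
    RingHom.ext fun x => by simp [rho_C]
  have c5 : (sig (1 : L)).comp Polynomial.C = Polynomial.C.comp Polynomial.C :=
    RingHom.ext fun x => by simp [sig_C]
  have d0 : (Matrix.map A (Polynomial.mapRingHom φ)).map (sig (1 : L)) =
      (B : Matrix (Fin n) (Fin n) (Polynomial (Polynomial L))) *
        (Matrix.map A (Polynomial.mapRingHom φ)).map Polynomial.C := by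
    rw [hMA, Matrix.map_mul, Matrix.map_mul, ← coe_SLmap, ← coe_SLmap, ← Matrix.mul_assoc,
      ← Matrix.SpecialLinearGroup.coe_mul, hBdef, inv_mul_cancel_right]
    congr 1
    ext1 i j
    exact congrArg (fun f => f (A0 i j)) c5
  have d1 := congrArg (fun M => M.map (rho (Polynomial.C (φ s)))) d0
  simp only [Matrix.map_mul, Matrix.map_map] at d1
  have f1 : (A.map (sig s)).map φ2 =
      A.map (rho (Polynomial.C (φ s)) ∘ sig 1 ∘ Polynomial.mapRingHom φ) := by
    ext1 i j
    have := congrArg (fun f => f (A i j)) c1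
    rw [← c3] at this
    exact this
  have f2 : (A.map Polynomial.C).map φ2 =
      A.map (rho (Polynomial.C (φ s)) ∘ Polynomial.C ∘ Polynomial.mapRingHom φ) := by
    ext1 i j
    have := congrArg (fun f => f (A i j)) c2
    rw [← c4] at this
    exact this
  have f3 : (E : Matrix (Fin n) (Fin n) (Polynomial (Polynomial R))).map φ2 =
      (B : Matrix (Fin n) (Fin n) (Polynomial (Polynomial L))).map
        (rho (Polynomial.C (φ s))) := by
    have := congrArg (fun g : Matrix.SpecialLinearGroup (Fin n) (Polynomial (Polynomial L)) =>
      (g : Matrix (Fin n) (Fin n) (Polynomial (Polynomial L)))) hEB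
    simpa [coe_SLmap] using this
  calc (A.map (sig s)).map φ2 = _ := f1
    _ = _ := d1
    _ = _ := by rw [← f2, ← f3]
    _ = _ := Matrix.map_mul.symm

theorem patch {R : Type*} [CommRing R] [IsDomain R] {n : ℕ} (hn : 3 ≤ n) {ι : Type*}
    (A : Matrix (Fin n) ι (Polynomial R))
    (hA : ∀ (m : Ideal R) [m.IsMaximal],
      ∃ M ∈ elemSL n (Polynomial (Localization.AtPrime m)),
      ∃ A0 : Matrix (Fin n) ι (Localization.AtPrime m),
        A.map (Polynomial.mapRingHom (algebraMap R (Localization.AtPrime m))) =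
          (M : Matrix (Fin n) (Fin n) (Polynomial (Localization.AtPrime m))) *
            A0.map Polynomial.C) :
    ∃ E ∈ elemSL n (Polynomial R),
      A = (E : Matrix (Fin n) (Fin n) (Polynomial R)) *
        A.map (Polynomial.C.comp (Polynomial.evalRingHom 0)) := by
  have htop : patchIdeal A = ⊤ := by
    by_contra hne
    obtain ⟨m, hm, hle⟩ := Ideal.exists_le_maximal _ hne
    obtain ⟨M, hM, A0, hMA⟩ := hA m
    obtain ⟨s, hs, hs'⟩ := patch_local hn A (algebraMap R (Localization.AtPrime m))
      (IsLocalization.injective _ m.primeCompl_le_nonZeroDivisors) m.primeCompl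
      (by
        intro c
        obtain ⟨⟨d, u⟩, h⟩ := IsLocalization.surj m.primeCompl c
        exact ⟨u, u.2, d, by rw [mul_comm]; exact h⟩) M hM A0 hMA
    exact hs (hle hs')
  obtain ⟨E, hE, h⟩ : (1 : R) ∈ patchIdeal A := htop ▸ Submodule.mem_top
  let π : Polynomial (Polynomial R) →+* Polynomial R :=
    Polynomial.eval₂RingHom (Polynomial.C.comp (Polynomial.evalRingHom 0)) Polynomial.X
  refine ⟨Matrix.SpecialLinearGroup.map π E, elem_map _ hE, ?_⟩
  have e1 : π.comp (sig 1) = RingHom.id _ := by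
    apply hom_ext2 <;> simp [π, sig_C, sig_X]
  have e2 : π.comp Polynomial.C = Polynomial.C.comp (Polynomial.evalRingHom 0) := by
    exact RingHom.ext fun x => by simp [π]
  have := congrArg (fun M => M.map π) h
  simp only [Matrix.map_mul, Matrix.map_map] at this
  rw [coe_SLmap, ← e2]
  refine Eq.trans ?_ this
  ext1 i j
  exact (congrArg (fun f => f (A i j)) e1).symm

/-- `A` is obtained from `B` by elementary row operations. -/
def ERel {n : ℕ} {ι R : Type*} [CommRing R] (A B : Matrix (Fin n) ι R) : Prop :=
  ∃ M ∈ elemSL n R, A = (M : Matrix (Fin n) (Fin n) R) * B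

theorem ERel.refl {n : ℕ} {ι R : Type*} [CommRing R] (A : Matrix (Fin n) ι R) : ERel A A :=
  ⟨1, one_mem _, by simp⟩

theorem ERel.trans {n : ℕ} {ι R : Type*} [CommRing R] {A B C : Matrix (Fin n) ι R}
    (h : ERel A B) (h' : ERel B C) : ERel A C := by
  obtain ⟨M, hM, rfl⟩ := h
  obtain ⟨N, hN, rfl⟩ := h'
  exact ⟨M * N, mul_mem hM hN, by rw [Matrix.SpecialLinearGroup.coe_mul, Matrix.mul_assoc]⟩

theorem ERel.symm {n : ℕ} {ι R : Type*} [CommRing R] {A B : Matrix (Fin n) ι R}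
    (h : ERel A B) : ERel B A := by
  obtain ⟨M, hM, rfl⟩ := h
  exact ⟨M⁻¹, inv_mem hM, by
    rw [← Matrix.mul_assoc, ← Matrix.SpecialLinearGroup.coe_mul, inv_mul_cancel]; simp⟩

theorem ERel.map {n : ℕ} {ι R S : Type*} [CommRing R] [CommRing S] {A B : Matrix (Fin n) ι R}
    (h : ERel A B) (f : R →+* S) : ERel (A.map f) (B.map f) := by
  obtain ⟨M, hM, rfl⟩ := h
  exact ⟨_, elem_map f hM, by rw [Matrix.map_mul, coe_SLmap]⟩

theorem ERel.el {n : ℕ} {ι R : Type*} [CommRing R] {A B : Matrix (Fin n) ι R} {i j : Fin n}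
    (h : i ≠ j) (a : R) (h1 : ∀ l, A i l = B i l + a * B j l)
    (h2 : ∀ k, k ≠ i → ∀ l, A k l = B k l) : ERel A B := by
  refine ⟨_, el_mem h a, ?_⟩
  ext k l
  show A k l = (Matrix.transvection i j a * B) k l
  by_cases hk : k = i
  · subst hk
    rw [Matrix.transvection_mul_apply_same, h1]
  · rw [Matrix.transvection_mul_apply_of_ne _ _ _ _ hk, h2 k hk]

theorem ERel.clear {n : ℕ} {ι R : Type*} [CommRing R] (B : Matrix (Fin n) ι R) (i : Fin n)
    (c : Fin n → R) (hc : c i = 0) :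
    ERel (Matrix.of fun k l => B k l + c k * B i l) B := by
  have H : ∀ s : Finset (Fin n), i ∉ s →
      ERel (Matrix.of fun k l => B k l + (if k ∈ s then c k else 0) * B i l) B := by
    intro s
    induction s using Finset.induction_on with
    | empty =>
      intro _
      convert ERel.refl B
      ext k l; simp
    | insert a s ha ih =>
      intro hi
      rw [Finset.mem_insert, not_or] at hi
      refine ERel.trans ?_ (ih hi.2)
      refine ERel.el (Ne.symm hi.1) (c a) ?_ ?_
      · intro l; simp [ha, hi.2]
      · intro k hk l; simp [hk]
  have := H (Finset.univ.erase i) (by simp)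
  convert this using 6 with k l
  by_cases hk : k = i
  · simp [hk, hc]
  · simp [hk]

/-- Column matrix. -/
def colm {n : ℕ} {R : Type*} (v : Fin n → R) : Matrix (Fin n) Unit R := Matrix.of fun i _ => v i

/-- Unimodular column. -/
def Unim {n : ℕ} {R : Type*} [CommRing R] (v : Fin n → R) : Prop := ∃ w : Fin n → R, w ⬝ᵥ v = 1

theorem colm_mul {n : ℕ} {R : Type*} [CommRing R] (M : Matrix (Fin n) (Fin n) R) (v : Fin n → R) :
    M * colm v = colm (M.mulVec v) := by
  ext i j; simp [colm, Matrix.mul_apply, Matrix.mulVec, dotProduct]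

theorem colm_inj {n : ℕ} {R : Type*} {v w : Fin n → R} (h : colm v = colm w) : v = w := by
  ext i; exact congrFun (congrFun h i) ()

theorem Unim.rel {n : ℕ} {R : Type*} [CommRing R] {v w : Fin n → R} (hw : Unim w)
    (h : ERel (colm v) (colm w)) : Unim v := by
  obtain ⟨M, hM, h⟩ := h.symm
  rw [colm_mul] at h
  obtain ⟨x, hx⟩ := hw
  rw [colm_inj h, Matrix.dotProduct_mulVec] at hx
  exact ⟨_, hx⟩

theorem Unim.map {n : ℕ} {R S : Type*} [CommRing R] [CommRing S] {v : Fin n → R} (hv : Unim v)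
    (f : R →+* S) : Unim (fun i => f (v i)) := by
  obtain ⟨x, hx⟩ := hv
  refine ⟨fun i => f (x i), ?_⟩
  have := congrArg f hx
  simpa [dotProduct] using this

open Polynomial in
theorem exists_monic_lower {L : Type*} [CommRing L] (g f0 : L[X]) (d : ℕ) (hg : g.Monic)
    (hgd : g.natDegree = d + 1) (hf0 : f0.natDegree ≤ d) (k : ℕ) (hk : IsUnit (f0.coeff k)) [Nontrivial L] :
    ∃ a b, (a * g + b * f0).natDegree ≤ d ∧ (a * g + b * f0).coeff d = 1 := by
  have H : ∀ j, j ≤ d → ∀ f ∈ Ideal.span {g, f0}, f.natDegree ≤ d →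
      ∃ h ∈ Ideal.span {g, f0}, h.natDegree ≤ d ∧ h.coeff d = f.coeff (d - j) := by
    intro j
    induction j with
    | zero => intro _ f hf hfd; exact ⟨f, hf, hfd, by simp⟩
    | succ j ih =>
      intro hj f hf hfd
      have hg' : g ∈ Ideal.span {g, f0} := Ideal.subset_span (by simp)
      obtain ⟨h, h1, h2, h3⟩ := ih (by omega) (X * f - C (f.coeff d) * g)
        (sub_mem (Ideal.mul_mem_left _ _ hf) (Ideal.mul_mem_left _ _ hg')) (by
          rw [natDegree_le_iff_coeff_eq_zero]
          intro N hN
          obtain ⟨N, rfl⟩ : ∃ M, N = M + 1 := ⟨N - 1, by omega⟩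
          rw [coeff_sub, coeff_X_mul, coeff_C_mul]
          rcases Nat.lt_or_ge d N with h | h
          · rw [coeff_eq_zero_of_natDegree_lt (p := f) (by omega),
              coeff_eq_zero_of_natDegree_lt (p := g) (by omega)]
            simp
          · have : N = d := by omega
            subst this
            have : g.coeff (N + 1) = 1 := by rw [← hgd]; exact hg
            rw [this]; simp)
      refine ⟨h + C (g.coeff (d - j)) * f, add_mem h1 (Ideal.mul_mem_left _ _ hf), ?_, ?_⟩
      · refine (natDegree_add_le _ _).trans (max_le h2 ?_)
        exact (natDegree_C_mul_le _ _).trans hfd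
      · have e : d - j = (d - (j + 1)) + 1 := by omega
        rw [coeff_add, h3, coeff_sub, coeff_C_mul, coeff_C_mul, e, coeff_X_mul]
        ring
  have hkd : k ≤ d := by
    by_contra hcon
    rw [coeff_eq_zero_of_natDegree_lt (by omega)] at hk
    exact not_isUnit_zero hk
  obtain ⟨h, h1, h2, h3⟩ := H (d - k) (by omega) f0 (Ideal.subset_span (by simp)) hf0
  rw [show d - (d - k) = k by omega] at h3
  obtain ⟨u, hu⟩ := hk
  obtain ⟨a, b, hab⟩ := Ideal.mem_span_pair.1 h1
  refine ⟨C (↑u⁻¹ : L) * a, C (↑u⁻¹ : L) * b, ?_⟩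
  have e : C (↑u⁻¹ : L) * a * g + C (↑u⁻¹ : L) * b * f0 = C (↑u⁻¹ : L) * h := by
    rw [← hab]; ring
  rw [e]
  refine ⟨(natDegree_C_mul_le _ _).trans h2, ?_⟩
  rw [coeff_C_mul, h3, ← hu]; simp

open Polynomial in
theorem col_local {L : Type*} [CommRing L] [IsLocalRing L] {n : ℕ} (hn : 3 ≤ n) (d : ℕ) :
    ∀ (v : Fin n → L[X]) (i : Fin n) (u : L), IsUnit u → (C u * v i).Monic →
      (C u * v i).natDegree = d → Unim v →
      ∃ v0 : Fin n → L, ERel (colm v) (colm fun k => C (v0 k)) := by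
  induction d with
  | zero =>
    intro v i u hu hm hd hv
    have h1 : C u * v i = 1 := hm.natDegree_eq_zero.1 hd
    obtain ⟨u, rfl⟩ := hu
    have h2 : v i = C (↑u⁻¹ : L) := by
      have : C (↑u⁻¹ : L) * (C (u : L) * v i) = v i := by
        rw [← mul_assoc, ← C_mul]; simp
      rw [← this, h1, mul_one]
    refine ⟨fun k => if k = i then (↑u⁻¹ : L) else 0, ERel.symm ?_⟩
    convert ERel.clear (colm v) i (fun k => if k = i then 0 else - (v k * C (u : L))) (by simp)
      using 1
    ext1 k l
    by_cases hk : k = i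
    · subst hk; simp [colm, h2]
    · simp only [colm, Matrix.of_apply, hk, if_false]
      rw [C_0]
      linear_combination (v k) * h1
  | succ d ih =>
    intro v i u hu hm hd hv
    set g := C u * v i with hg
    set v' : Fin n → L[X] := fun k => if k = i then v i else v k %ₘ g with hv'
    have hR : ERel (colm v') (colm v) := by
      convert ERel.clear (colm v) i (fun k => if k = i then 0 else - (C u * (v k /ₘ g))) (by simp)
        using 1
      ext1 k l
      by_cases hk : k = i
      · subst hk; simp [colm, hv']
      · simp only [colm, Matrix.of_apply, hk, if_false, hv']
        have := modByMonic_add_div (v k) g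
        rw [hg] at this ⊢
        linear_combination this
    have hun : Unim v' := hv.rel hR
    have hdeg : ∀ k, k ≠ i → (v' k).natDegree ≤ d := by
      intro k hk
      simp only [hv', hk, if_false]
      have := natDegree_modByMonic_lt (v k) hm (by intro h; rw [h] at hd; simp at hd)
      omega
    obtain ⟨j, hji, k, hk⟩ : ∃ j, j ≠ i ∧ ∃ k, IsUnit ((v' j).coeff k) := by
      by_contra hcon
      push Not at hcon
      have hun' := hun.map (mapRingHom (IsLocalRing.residue L))
      obtain ⟨w, hw⟩ := hun'
      have h0 : ∀ k, k ≠ i → mapRingHom (IsLocalRing.residue L) (v' k) = 0 := by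
        intro k hk
        ext m
        simp only [coe_mapRingHom, coeff_map, coeff_zero]
        rw [IsLocalRing.residue_eq_zero_iff, IsLocalRing.mem_maximalIdeal]
        exact hcon k hk m
      rw [dotProduct, Finset.sum_eq_single i (fun k _ hk => by rw [h0 k hk, mul_zero])
        (by simp)] at hw
      have hui : IsUnit (mapRingHom (IsLocalRing.residue L) (v' i)) :=
        IsUnit.of_mul_eq_one_right _ hw
      have hgu : IsUnit (mapRingHom (IsLocalRing.residue L) g) := by
        rw [hg, map_mul]
        refine IsUnit.mul ((hu.map C).map _) ?_
        simpa [hv'] using hui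
      have h1 := (hm.map (IsLocalRing.residue L)).eq_one_of_isUnit hgu
      have h2 := hm.natDegree_map (IsLocalRing.residue L)
      rw [h1, hd] at h2
      simp at h2
    obtain ⟨a, b, hab1, hab2⟩ := exists_monic_lower g (v' j) d hm hd (hdeg j hji) k hk
    obtain ⟨p, hpi, hpj⟩ := exists_third hn i j
    set h := a * g + b * v' j with hh
    set c := C (1 - (v' p).coeff d) with hc
    set v1 : Fin n → L[X] := fun k => if k = p then v' p + c * a * C u * v' i else v' k with hv1
    set v2 : Fin n → L[X] := fun k => if k = p then v' p + c * h else v' k with hv2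
    have hR1 : ERel (colm v1) (colm v') := by
      refine ERel.el hpi (c * a * C u) ?_ ?_
      · intro l; simp [colm, hv1]
      · intro k hk l; simp [colm, hv1, hk]
    have hR2 : ERel (colm v2) (colm v1) := by
      refine ERel.el hpj (c * b) ?_ ?_
      · intro l
        simp only [colm, hv1, hv2, hpj.symm, Matrix.of_apply, if_true, if_false, hh, hg]
        simp only [hv', if_true]
        ring
      · intro k hk l; simp [colm, hv1, hv2, hk]
    have hR3 := (hR2.trans hR1).trans hR
    have hd2 : (v2 p).natDegree ≤ d := by
      simp only [hv2, if_true]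
      refine (natDegree_add_le _ _).trans (max_le (hdeg p hpi) ?_)
      exact (natDegree_C_mul_le _ _).trans hab1
    have hc2 : (v2 p).coeff d = 1 := by
      simp only [hv2, if_true, coeff_add, hc, coeff_C_mul, hab2]
      ring
    have hd3 : (v2 p).natDegree = d :=
      le_antisymm hd2 (le_natDegree_of_ne_zero (by rw [hc2]; exact one_ne_zero))
    obtain ⟨v0, hv0⟩ := ih v2 p 1 isUnit_one
      (by rw [C_1, one_mul, Monic, leadingCoeff, hd3, hc2]) (by rw [C_1, one_mul, hd3])
      (hv.rel hR3)
    exact ⟨v0, hR3.symm.trans hv0⟩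

/-- The `2 × 2` matrix `(a b; c d)` placed in the lower right corner. -/
def blk {R : Type*} [CommRing R] (a b c d : R) (h : a * d - b * c = 1) :
    Matrix.SpecialLinearGroup (Fin 3) R :=
  ⟨!![1, 0, 0; 0, a, b; 0, c, d], by rw [Matrix.det_fin_three]; simp [h]⟩

theorem blk_coe {R : Type*} [CommRing R] (a b c d : R) (h : a * d - b * c = 1) :
    (blk a b c d h : Matrix (Fin 3) (Fin 3) R) = !![1, 0, 0; 0, a, b; 0, c, d] := rfl

/-- The `2 × 2` matrix `(a b; c d)` placed at the indices `1, 0`. -/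
def blk' {R : Type*} [CommRing R] (a b c d : R) (h : a * d - b * c = 1) :
    Matrix.SpecialLinearGroup (Fin 3) R :=
  ⟨!![d, c, 0; b, a, 0; 0, 0, 1], by
    rw [Matrix.det_fin_three]; simp; linear_combination h⟩

theorem blk'_coe {R : Type*} [CommRing R] (a b c d : R) (h : a * d - b * c = 1) :
    (blk' a b c d h : Matrix (Fin 3) (Fin 3) R) = !![d, c, 0; b, a, 0; 0, 0, 1] := rfl

theorem ne12 : (1 : Fin 3) ≠ 2 := by decide
theorem ne21 : (2 : Fin 3) ≠ 1 := by decide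
theorem ne02 : (0 : Fin 3) ≠ 2 := by decide
theorem ne20 : (2 : Fin 3) ≠ 0 := by decide
theorem ne01 : (0 : Fin 3) ≠ 1 := by decide

theorem el12 {R : Type*} [CommRing R] (a : R) :
    (el ne12 a : Matrix (Fin 3) (Fin 3) R) = !![1, 0, 0; 0, 1, a; 0, 0, 1] := by
  rw [el_coe]; ext i j
  fin_cases i <;> fin_cases j <;> simp [Matrix.single_apply]

theorem el21 {R : Type*} [CommRing R] (a : R) :
    (el ne21 a : Matrix (Fin 3) (Fin 3) R) = !![1, 0, 0; 0, 1, 0; 0, a, 1] := by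
  rw [el_coe]; ext i j
  fin_cases i <;> fin_cases j <;> simp [Matrix.single_apply]

theorem el02 {R : Type*} [CommRing R] (a : R) :
    (el ne02 a : Matrix (Fin 3) (Fin 3) R) = !![1, 0, a; 0, 1, 0; 0, 0, 1] := by
  rw [el_coe]; ext i j
  fin_cases i <;> fin_cases j <;> simp [Matrix.single_apply]

theorem el20 {R : Type*} [CommRing R] (a : R) :
    (el ne20 a : Matrix (Fin 3) (Fin 3) R) = !![1, 0, 0; 0, 1, 0; a, 0, 1] := by
  rw [el_coe]; ext i j
  fin_cases i <;> fin_cases j <;> simp [Matrix.single_apply]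

theorem el01 {R : Type*} [CommRing R] (a : R) :
    (el ne01 a : Matrix (Fin 3) (Fin 3) R) = !![1, a, 0; 0, 1, 0; 0, 0, 1] := by
  rw [el_coe]; ext i j
  fin_cases i <;> fin_cases j <;> simp [Matrix.single_apply]

theorem blk'_mem {R : Type*} [CommRing R] (a b c d : R) (h : a * d - b * c = 1)
    (hm : blk a b c d h ∈ elemSL 3 R) : blk' a b c d h ∈ elemSL 3 R := by
  have e : blk' a b c d h * (el ne02 1 * el ne20 (-1) * el ne02 1) =
      (el ne02 1 * el ne20 (-1) * el ne02 1) * blk a b c d h := by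
    apply Subtype.ext
    simp only [Matrix.SpecialLinearGroup.coe_mul, blk_coe, blk'_coe, el02, el20]
    ext i j
    fin_cases i <;> fin_cases j <;> simp [Matrix.mul_apply, Fin.sum_univ_three]
  have hw : (el ne02 (1 : R) * el ne20 (-1) * el ne02 1) ∈ elemSL 3 R :=
    mul_mem (mul_mem (el_mem _ _) (el_mem _ _)) (el_mem _ _)
  rw [← Subgroup.mul_mem_cancel_right _ hw, e]
  exact mul_mem hw hm

theorem mem_of_row {R : Type*} [CommRing R] (N : Matrix.SpecialLinearGroup (Fin 3) R)
    (h0 : (N : Matrix (Fin 3) (Fin 3) R) 1 0 = 0) (h1 : (N : Matrix (Fin 3) (Fin 3) R) 1 1 = 1)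
    (h2 : (N : Matrix (Fin 3) (Fin 3) R) 1 2 = 0) (h3 : (N : Matrix (Fin 3) (Fin 3) R) 2 2 = 1) :
    N ∈ elemSL 3 R := by
  have hd := N.det_coe
  rw [Matrix.det_fin_three, h0, h1, h2, h3] at hd
  have e : N = el ne21 ((N : Matrix (Fin 3) (Fin 3) R) 2 1) *
      el ne01 ((N : Matrix (Fin 3) (Fin 3) R) 0 1) *
      el ne02 ((N : Matrix (Fin 3) (Fin 3) R) 0 2) *
      el ne20 ((N : Matrix (Fin 3) (Fin 3) R) 2 0) := by
    apply Subtype.ext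
    simp only [Matrix.SpecialLinearGroup.coe_mul, el21, el01, el02, el20]
    ext i j
    fin_cases i <;> fin_cases j <;>
      simp [Matrix.mul_apply, Fin.sum_univ_three, h0, h1, h2, h3]
    linear_combination hd
  rw [e]
  exact mul_mem (mul_mem (mul_mem (el_mem _ _) (el_mem _ _)) (el_mem _ _)) (el_mem _ _)

/-- The (stable) triviality of the Mennicke symbol of `(a, b)`. -/
def DD {R : Type*} [CommRing R] (a b : R) : Prop :=
  ∀ c d (h : a * d - b * c = 1), blk a b c d h ∈ elemSL 3 R

theorem DD.col1 {R : Type*} [CommRing R] {a b : R} (h : DD a b) (t : R) : DD (a + t * b) b := by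
  intro c d hh
  have e : blk (a + t * b) b c d hh =
      blk a b (c - t * d) d (by linear_combination hh) * el ne21 t := by
    apply Subtype.ext
    simp only [Matrix.SpecialLinearGroup.coe_mul, blk_coe, el21]
    ext i j
    fin_cases i <;> fin_cases j <;> simp [Matrix.mul_apply, Fin.sum_univ_three] <;> ring
  rw [e]
  exact mul_mem (h _ _ _) (el_mem _ _)

theorem DD.col2 {R : Type*} [CommRing R] {a b : R} (h : DD a b) (t : R) : DD a (b + t * a) := by
  intro c d hh
  have e : blk a (b + t * a) c d hh =
      blk a b c (d - t * c) (by linear_combination hh) * el ne12 t := by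
    apply Subtype.ext
    simp only [Matrix.SpecialLinearGroup.coe_mul, blk_coe, el12]
    ext i j
    fin_cases i <;> fin_cases j <;> simp [Matrix.mul_apply, Fin.sum_univ_three] <;> ring
  rw [e]
  exact mul_mem (h _ _ _) (el_mem _ _)

theorem DD.of_mem {R : Type*} [CommRing R] {a b c d : R} (h : a * d - b * c = 1)
    (hm : blk a b c d h ∈ elemSL 3 R) : DD a b := by
  intro c' d' h'
  have e : blk a b c' d' h' = el ne21 (d * c' - c * d') * blk a b c d h := by
    apply Subtype.ext
    simp only [Matrix.SpecialLinearGroup.coe_mul, blk_coe, el21]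
    ext i j
    fin_cases i <;> fin_cases j <;> simp [Matrix.mul_apply, Fin.sum_univ_three]
    · linear_combination (-c') * h + c * h'
    · linear_combination (-d') * h + d * h'
  rw [e]
  exact mul_mem (el_mem _ _) hm

theorem DD.row {R : Type*} [CommRing R] {a b c d : R} (h : a * d - b * c = 1) (t : R)
    (hD : DD (a + t * c) (b + t * d)) : DD a b := by
  apply DD.of_mem h
  have e : blk a b c d h = el ne12 (-t) *
      blk (a + t * c) (b + t * d) c d (by linear_combination h) := by
    apply Subtype.ext
    simp only [Matrix.SpecialLinearGroup.coe_mul, blk_coe, el12]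
    ext i j
    fin_cases i <;> fin_cases j <;> simp [Matrix.mul_apply, Fin.sum_univ_three]
  rw [e]
  exact mul_mem (el_mem _ _) (hD _ _ _)

theorem DD.one {R : Type*} [CommRing R] (b : R) : DD 1 b := by
  apply DD.of_mem (c := 0) (d := 1) (by ring)
  have e : blk 1 b 0 1 (by ring) = el ne12 b := by
    apply Subtype.ext
    rw [blk_coe, el12]
  rw [e]
  exact el_mem _ _

theorem DD.unit_right {R : Type*} [CommRing R] (a : R) {b : R} (hb : IsUnit b) : DD a b := by
  obtain ⟨u, rfl⟩ := hb
  have := (DD.one (u : R)).col1 ((a - 1) * ↑u⁻¹)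
  simpa [mul_assoc] using this

theorem DD.unit_left {R : Type*} [CommRing R] {a : R} (b : R) (ha : IsUnit a) : DD a b := by
  obtain ⟨u, rfl⟩ := ha
  have := (DD.unit_right (u : R) isUnit_one).col2 ((b - 1) * ↑u⁻¹)
  simpa [mul_assoc] using this

theorem DD.mul {R : Type*} [CommRing R] {a a' b : R} (h : DD a b) (h' : DD a' b) :
    DD (a * a') b := by
  intro x y hh
  have h1 : a * (a' * y) - b * x = 1 := by linear_combination hh
  have h2 : a' * (a * y) - b * x = 1 := by linear_combination hh
  have m1 := h _ _ h1
  have m2 := blk'_mem _ _ _ _ h2 (h' _ _ h2)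
  have m3 : blk (a' * y) (-b) (-x) a (by linear_combination h1) ∈ elemSL 3 R := by
    have : blk (a' * y) (-b) (-x) a (by linear_combination h1) = (blk _ _ _ _ h1)⁻¹ := by
      rw [eq_inv_iff_mul_eq_one]
      apply Subtype.ext
      simp only [Matrix.SpecialLinearGroup.coe_mul, blk_coe, Matrix.SpecialLinearGroup.coe_one]
      ext i j
      fin_cases i <;> fin_cases j <;> simp [Matrix.mul_apply, Fin.sum_univ_three]
      · linear_combination h1
      · ring
      · ring
      · linear_combination h1
    rw [this]; exact inv_mem m1
  have m4 : blk' (a * y) (-b) (-x) a' (by linear_combination h2) ∈ elemSL 3 R := by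
    have : blk' (a * y) (-b) (-x) a' (by linear_combination h2) = (blk' _ _ _ _ h2)⁻¹ := by
      rw [eq_inv_iff_mul_eq_one]
      apply Subtype.ext
      simp only [Matrix.SpecialLinearGroup.coe_mul, blk'_coe, Matrix.SpecialLinearGroup.coe_one]
      ext i j
      fin_cases i <;> fin_cases j <;> simp [Matrix.mul_apply, Fin.sum_univ_three]
      · linear_combination h2
      · ring
      · ring
      · linear_combination h2
    rw [this]; exact inv_mem m2
  have m5 : el ne20 (1 : R) * el ne02 (a' - 1) * blk (a' * y) (-b) (-x) a
      (by linear_combination h1) * blk' (a * y) (-b) (-x) a' (by linear_combination h2) ∈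
      elemSL 3 R := mul_mem (mul_mem (mul_mem (el_mem _ _) (el_mem _ _)) m3) m4
  rw [← Subgroup.mul_mem_cancel_right _ m5]
  apply mem_of_row
  all_goals
    simp only [Matrix.SpecialLinearGroup.coe_mul, blk_coe, blk'_coe, el20, el02]
    simp [Matrix.mul_apply, Fin.sum_univ_three]
  · linear_combination (-a' * b) * hh
  · linear_combination (a * a' * y + 1) * hh
  · ring
  · linear_combination hh

open Polynomial in
theorem DD_local_aux {L : Type*} [CommRing L] [Nontrivial L] (d : ℕ)
    (ih : ∀ p q : L[X], p.Monic → p.natDegree = d → DD p q) (p q : L[X]) (hp : p.Monic)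
    (hpd : p.natDegree = d + 1) (hq : q.natDegree ≤ d) (hu : IsUnit (q.coeff 0)) : DD p q := by
  have hX : DD X q := by
    have h1 : DD (X : L[X]) (C (q.coeff 0)) := DD.unit_right _ (hu.map C)
    have h2 := h1.col2 (divX q)
    rwa [add_comm, divX_mul_X_add] at h2
  obtain ⟨u, hu⟩ := hu
  set t : L := - (p.coeff 0) * ↑u⁻¹ with ht
  set p1 := p + C t * q with hp1
  have hdeg : (C t * q).degree < p.degree := by
    rw [degree_eq_natDegree hp.ne_zero, hpd]
    refine lt_of_le_of_lt (degree_le_natDegree) ?_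
    have := natDegree_C_mul_le t q
    exact_mod_cast (by omega : (C t * q).natDegree < d + 1)
  have hm1 : p1.Monic := hp.add_of_left hdeg
  have hd1 : p1.natDegree = d + 1 := by
    rw [← hpd]; exact natDegree_add_eq_left_of_degree_lt hdeg
  have h0 : p1.coeff 0 = 0 := by
    rw [hp1, coeff_add, coeff_C_mul, ← hu, ht, mul_assoc]; simp
  have e : p1 = X * divX p1 := by
    conv_lhs => rw [← divX_mul_X_add p1, h0]
    simp [mul_comm]
  have hd2 : (divX p1).natDegree = d := by
    rw [natDegree_divX_eq_natDegree_tsub_one, hd1]; simp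
  have hm2 : (divX p1).Monic := by
    rw [Monic, leadingCoeff, hd2, coeff_divX, ← hd1]; exact hm1
  have h3 : DD p1 q := by
    rw [e]; exact hX.mul (ih _ _ hm2 hd2)
  have h4 := h3.col1 (- C t)
  have e2 : p1 + -C t * q = p := by rw [hp1]; ring
  rwa [e2] at h4

open Polynomial in
theorem DD_local {L : Type*} [CommRing L] [IsLocalRing L] (d : ℕ) :
    ∀ p q : L[X], p.Monic → p.natDegree = d → DD p q := by
  induction d with
  | zero =>
    intro p q hp hd
    rw [hp.natDegree_eq_zero.1 hd]
    exact DD.one q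
  | succ d ih =>
    have main : ∀ p q : L[X], p.Monic → p.natDegree = d + 1 → q.natDegree ≤ d → DD p q := by
      intro p q hp hd hq
      by_cases hu : IsUnit (q.coeff 0)
      · exact DD_local_aux d ih p q hp hd hq hu
      intro r0 s0 h0
      revert r0 s0 h0
      by_contra hcon
      push Not at hcon
      obtain ⟨r0, s0, h0, hcon⟩ := hcon
      have hp1 : p ≠ 1 := by intro h; rw [h] at hd; simp at hd
      set r := r0 %ₘ p with hr
      set s := s0 - (r0 /ₘ p) * q with hs
      have hrs : p * s - q * r = 1 := by
        have := modByMonic_add_div r0 p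
        rw [hs, hr]
        linear_combination h0 - q * this
      have hrd : r.natDegree < d + 1 := by
        have := natDegree_modByMonic_lt r0 hp hp1
        rw [hr]
        omega
      have hsd : s.natDegree ≤ d := by
        by_cases hs0 : s = 0
        · rw [hs0]; simp
        have h1 : (p * s).natDegree = d + 1 + s.natDegree := by
          rw [hp.natDegree_mul' hs0, hd]
        have h2 : p * s = 1 + q * r := by linear_combination hrs
        have h3 : (1 + q * r).natDegree ≤ d + d := by
          refine (natDegree_add_le _ _).trans (max_le (by simp) ?_)
          refine natDegree_mul_le.trans ?_
          omega
        rw [← h2, h1] at h3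
        omega
      have hs0 : IsUnit (s.coeff 0) := by
        have h1 := congrArg (fun f => coeff f 0) hrs
        simp only [coeff_sub, mul_coeff_zero, coeff_one_zero] at h1
        have h2 : ¬ IsUnit (q.coeff 0 * r.coeff 0) := fun h => hu (isUnit_of_mul_isUnit_left h)
        have h3 : IsUnit (p.coeff 0 * s.coeff 0) := by
          by_contra h4
          have h5 := IsLocalRing.nonunits_add (a := p.coeff 0 * s.coeff 0)
            (b := - (q.coeff 0 * r.coeff 0)) h4 (by rw [mem_nonunits_iff, IsUnit.neg_iff]; exact h2)
          rw [← sub_eq_add_neg, h1] at h5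
          exact h5 isUnit_one
        exact isUnit_of_mul_isUnit_right h3
      have hqs : IsUnit ((q + 1 * s).coeff 0) := by
        rw [one_mul, coeff_add]
        by_contra h4
        have h5 := IsLocalRing.nonunits_add (a := q.coeff 0 + s.coeff 0)
            (b := - (q.coeff 0)) h4 (by rw [mem_nonunits_iff, IsUnit.neg_iff]; exact hu)
        rw [add_neg_cancel_comm] at h5
        exact h5 hs0
      have hdeg : (1 * r).degree < p.degree := by
        rw [one_mul, degree_eq_natDegree hp.ne_zero, hd]
        refine lt_of_le_of_lt (degree_le_natDegree) ?_
        exact_mod_cast hrd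
      have hD : DD p q := by
        refine DD.row hrs 1 (DD_local_aux d ih _ _ (hp.add_of_left hdeg) ?_ ?_ hqs)
        · rw [← hd]; exact natDegree_add_eq_left_of_degree_lt hdeg
        · rw [one_mul]
          exact (natDegree_add_le _ _).trans (max_le hq hsd)
      exact hcon (hD _ _ _)
    intro p q hp hd
    have hp1 : p ≠ 1 := by intro h; rw [h] at hd; simp at hd
    have h1 := (main p (q %ₘ p) hp hd (by
      have := natDegree_modByMonic_lt q hp hp1
      omega)).col2 (q /ₘ p)
    rwa [mul_comm, modByMonic_add_div] at h1

namespace SuslinNN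

section equivT

open Polynomial MvPolynomial Ideal Nat RingHom List

variable {k : Type*} [Field k] {n : ℕ} (f : MvPolynomial (Fin (n + 1)) k)
variable (v w : Fin (n + 1) →₀ ℕ)

variable {f v} in
theorem lt_up (vlt : ∀ i, v i < 2 + f.totalDegree) : ∀ l ∈ ofFn v, l < 2 + f.totalDegree := by
  grind


/-- We construct an algebra map `T1 f c` which maps `X_i` into `X_i + c • X_0 ^ r_i` when `i ≠ 0`
and `X_0` to `X_0`. -/
noncomputable abbrev T1 (c : k) :
    MvPolynomial (Fin (n + 1)) k →ₐ[k] MvPolynomial (Fin (n + 1)) k :=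
  aeval fun i ↦ if i = 0 then X 0 else X i + c • X 0 ^ (2 + f.totalDegree) ^ i.1

theorem t1_comp_t1_neg (c : k) : (T1 f c).comp (T1 f (-c)) = AlgHom.id _ _ := by
  rw [comp_aeval, ← MvPolynomial.aeval_X_left]
  ext i v
  cases i using Fin.cases <;> simp

/-- `T1 f 1` leads to an algebra equiv `T f`. -/
noncomputable abbrev T := AlgEquiv.ofAlgHom (T1 f 1) (T1 f (-1))
  (t1_comp_t1_neg f 1) (by simpa using t1_comp_t1_neg f (-1))

theorem sum_r_mul_ne (vlt : ∀ i, v i < 2 + f.totalDegree) (wlt : ∀ i, w i < 2 + f.totalDegree) (ne : v ≠ w) :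
    ∑ x : Fin (n + 1), (2 + f.totalDegree) ^ x.1 * v x ≠ ∑ x : Fin (n + 1), (2 + f.totalDegree) ^ x.1 * w x := by
  intro h
  refine ne <| Finsupp.ext <| congrFun <| ofFn_inj.mp ?_
  apply ofDigits_inj_of_len_eq (Nat.lt_add_right f.totalDegree one_lt_two)
    (by simp) (lt_up vlt) (lt_up wlt)
  simpa only [ofDigits_eq_sum_mapIdx, mapIdx_eq_ofFn, get_ofFn, length_ofFn,
    Fin.val_cast, mul_comm, sum_ofFn] using! h

theorem degreeOf_zero_t {a : k} (ha : a ≠ 0) : ((T f) (monomial v a)).degreeOf 0 =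
    ∑ i : Fin (n + 1), ((2 + f.totalDegree) ^ (i : Fin (n + 1)).1) * v i := by
  rw [← natDegree_finSuccEquiv, monomial_eq, Finsupp.prod_pow v fun a ↦ X a]
  simp only [Fin.prod_univ_succ, Fin.sum_univ_succ, map_mul, map_prod, map_pow,
    AlgEquiv.ofAlgHom_apply, MvPolynomial.aeval_C, MvPolynomial.aeval_X, if_pos, Fin.succ_ne_zero,
    ite_false, one_smul, map_add, finSuccEquiv_X_zero, finSuccEquiv_X_succ, algebraMap_eq]
  have h (i : Fin n) :
      (Polynomial.C (X (R := k) i) + Polynomial.X ^ (2 + f.totalDegree) ^ i.succ.1) ^ v i.succ ≠ 0 :=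
    pow_ne_zero (v i.succ) (leadingCoeff_ne_zero.mp <| by simp [add_comm, leadingCoeff_X_pow_add_C])
  rw [natDegree_mul (by simp [ha]) (mul_ne_zero (by simp) (Finset.prod_ne_zero_iff.mpr
    (fun i _ ↦ h i))), natDegree_mul (by simp) (Finset.prod_ne_zero_iff.mpr (fun i _ ↦ h i)),
    natDegree_prod _ _ (fun i _ ↦ h i), natDegree_finSuccEquiv, degreeOf_C]
  simpa only [natDegree_pow, zero_add, natDegree_X, mul_one, Fin.val_zero, pow_zero, one_mul,
    add_right_inj] using Finset.sum_congr rfl (fun i _ ↦ by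
    rw [add_comm (Polynomial.C _), natDegree_X_pow_add_C, mul_comm])

/-- `T` maps different monomials of `f` to polynomials with different degrees in `X_0`. -/
theorem degreeOf_t_ne_of_ne (hv : v ∈ f.support) (hw : w ∈ f.support) (ne : v ≠ w) :
    (T f <| monomial v <| coeff v f).degreeOf 0 ≠
    (T f <| monomial w <| coeff w f).degreeOf 0 := by
  rw [degreeOf_zero_t _ _ <| mem_support_iff.mp hv, degreeOf_zero_t _ _ <| mem_support_iff.mp hw]
  refine sum_r_mul_ne f v w (fun i ↦ ?_) (fun i ↦ ?_) ne <;>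
  exact lt_of_le_of_lt ((monomial_le_degreeOf i ‹_›).trans (degreeOf_le_totalDegree f i))
    (by lia)

theorem leadingCoeff_finSuccEquiv_t :
    (finSuccEquiv k n ((T f) ((monomial v) (coeff v f)))).leadingCoeff =
    algebraMap k _ (coeff v f) := by
  rw [monomial_eq, Finsupp.prod_fintype]
  · simp only [map_mul, map_prod, leadingCoeff_mul, leadingCoeff_prod]
    rw [AlgEquiv.ofAlgHom_apply, algHom_C, algebraMap_eq, finSuccEquiv_apply,
      eval₂Hom_C, coe_comp]
    simp only [AlgEquiv.ofAlgHom_apply, Function.comp_apply, leadingCoeff_C, map_pow,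
      leadingCoeff_pow, algebraMap_eq]
    have : ∀ j, ((finSuccEquiv k n) ((T1 f) 1 (X j))).leadingCoeff = 1 := fun j ↦ by
      by_cases h : j = 0
      · simp [h, finSuccEquiv_apply]
      · simp only [aeval_eq_bind₁, bind₁_X_right, if_neg h, one_smul, map_add, map_pow]
        obtain ⟨i, rfl⟩ := Fin.exists_succ_eq.mpr h
        simp [finSuccEquiv_X_succ, finSuccEquiv_X_zero, add_comm]
    simp only [this, one_pow, Finset.prod_const_one, mul_one]
  exact fun i ↦ pow_zero _

/-- `T` maps `f` into some polynomial in `X_0` such that the leading coefficient is invertible. -/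
theorem T_leadingcoeff_isUnit (fne : f ≠ 0) :
    IsUnit (finSuccEquiv k n (T f f)).leadingCoeff := by
  obtain ⟨v, vin, vs⟩ := Finset.exists_max_image f.support
    (fun v ↦ (T f ((monomial v) (coeff v f))).degreeOf 0) (support_nonempty.mpr fne)
  set h := fun w ↦ (MvPolynomial.monomial w) (coeff w f)
  simp only [← natDegree_finSuccEquiv] at vs
  replace vs : ∀ x ∈ f.support \ {v}, (finSuccEquiv k n ((T f) (h x))).degree <
      (finSuccEquiv k n ((T f) (h v))).degree := by
    intro x hx
    obtain ⟨h1, h2⟩ := Finset.mem_sdiff.mp hx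
    apply degree_lt_degree <| lt_of_le_of_ne (vs x h1) ?_
    simpa only [natDegree_finSuccEquiv]
      using degreeOf_t_ne_of_ne f _ _ h1 vin <| ne_of_not_mem_cons h2
  have coeff : (finSuccEquiv k n ((T f) (h v + ∑ x ∈ f.support \ {v}, h x))).leadingCoeff =
      (finSuccEquiv k n ((T f) (h v))).leadingCoeff := by
    simp only [map_add, map_sum]
    rw [add_comm]
    apply leadingCoeff_add_of_degree_lt <| (lt_of_le_of_lt <| degree_sum_le _ _) ?_
    have h2 : h v ≠ 0 := by simpa [h] using mem_support_iff.mp vin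
    replace h2 : (finSuccEquiv k n ((T f) (h v))) ≠ 0 := fun eq ↦ h2 <|
      by simpa only [map_eq_zero_iff _ (AlgEquiv.injective _)] using eq
    exact (Finset.sup_lt_iff <| Ne.bot_lt (fun x ↦ h2 <| degree_eq_bot.mp x)).mpr vs
  nth_rw 2 [← f.support_sum_monomial_coeff]
  rw [Finset.sum_eq_add_sum_sdiff_singleton_of_mem vin h]
  rw [leadingCoeff_finSuccEquiv_t] at coeff
  simpa only [coeff, algebraMap_eq] using (mem_support_iff.mp vin).isUnit.map MvPolynomial.C

end equivT

end SuslinNN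

theorem exists_good_equiv {K : Type*} [Field K] {m : ℕ} (f : MvPolynomial (Fin (m + 1)) K)
    (hf : f ≠ 0) : ∃ σ : MvPolynomial (Fin (m + 1)) K ≃+* Polynomial (MvPolynomial (Fin m) K),
      IsUnit (σ f).leadingCoeff :=
  ⟨((SuslinNN.T f).trans (MvPolynomial.finSuccEquiv K m)).toRingEquiv,
    SuslinNN.T_leadingcoeff_isUnit f hf⟩

theorem col_unit {R : Type*} [CommRing R] {n : ℕ} (hn : 1 ≤ n) (v : Fin (n + 1) → R)
    (i : Fin (n + 1)) (hi : IsUnit (v i)) : ERel (colm v) (colm (Pi.single 0 1)) := by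
  have H1 : ∀ v : Fin (n + 1) → R, v 0 = 1 → ERel (colm v) (colm (Pi.single 0 1)) := by
    intro v hv
    convert ERel.clear (colm (Pi.single (0 : Fin (n + 1)) (1 : R))) 0
      (fun k => if k = 0 then 0 else v k) (by simp) using 1
    ext1 k l
    by_cases hk : k = 0
    · subst hk; simp [colm, hv]
    · simp [colm, hk]
  have H2 : ∀ v : Fin (n + 1) → R, ∀ i, i ≠ 0 → IsUnit (v i) →
      ERel (colm v) (colm (Pi.single 0 1)) := by
    intro v i hi hu
    obtain ⟨u, hu⟩ := hu
    refine ERel.trans ?_ (H1 (fun k => if k = 0 then 1 else v k) (by simp))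
    refine ERel.el (Ne.symm hi) ((v 0 - 1) * ↑u⁻¹) ?_ ?_
    · intro l
      simp [colm, hi, ← hu, mul_assoc]
    · intro k hk l
      simp [colm, hk]
  by_cases h0 : i = 0
  · subst h0
    obtain ⟨u, hu⟩ := hi
    have hj : (⟨1, by omega⟩ : Fin (n + 1)) ≠ 0 := by
      intro h; simpa using congrArg Fin.val h
    refine ERel.trans ?_ (H2 (fun k => if k = ⟨1, by omega⟩ then 1 else v k) ⟨1, by omega⟩ hj
      (by simp))
    refine ERel.el hj ((v ⟨1, by omega⟩ - 1) * ↑u⁻¹) ?_ ?_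
    · intro l
      simp [colm, hj.symm, ← hu, mul_assoc]
    · intro k hk l
      simp [colm, hk]
  · exact H2 v i h0 hi

theorem isUnit_zero_vars {K : Type*} [Field K] (f : MvPolynomial (Fin 0) K) (hf : f ≠ 0) :
    IsUnit f := by
  have h : MvPolynomial.isEmptyRingEquiv K (Fin 0) f ≠ 0 := by
    rwa [Ne, map_eq_zero_iff _ (RingEquiv.injective _)]
  exact (MulEquiv.isUnit_map (MvPolynomial.isEmptyRingEquiv K (Fin 0))).1 h.isUnit

theorem Unim.exists_ne {R : Type*} [CommRing R] [Nontrivial R] {n : ℕ} {v : Fin n → R}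
    (hv : Unim v) : ∃ i, v i ≠ 0 := by
  by_contra h
  push Not at h
  obtain ⟨w, hw⟩ := hv
  simp [dotProduct, h] at hw

open Polynomial in
theorem col_poly {R : Type*} [CommRing R] [IsDomain R] {n : ℕ} (hn : 3 ≤ n) (v : Fin n → R[X])
    (i : Fin n) (u : R) (hu : IsUnit u) (hmon : (C u * v i).Monic) (hv : Unim v) :
    ERel (colm v) (colm fun k => C ((v k).eval 0)) := by
  obtain ⟨E, hE, hEq⟩ := patch hn (colm v) (by
    intro P hP
    have hm' := hmon.map (algebraMap R (Localization.AtPrime P))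
    rw [Polynomial.map_mul, map_C] at hm'
    obtain ⟨v0, M, hM, h⟩ := col_local hn _
      (fun k => mapRingHom (algebraMap R (Localization.AtPrime P)) (v k)) i
      (algebraMap R (Localization.AtPrime P) u)
      (hu.map _) hm' rfl (hv.map _)
    exact ⟨M, hM, colm v0, h⟩)
  exact ⟨E, hE, hEq⟩

open Polynomial in
theorem col_trans (n : ℕ) (hn : 3 ≤ n + 1) (K : Type*) [Field K] (m : ℕ) :
    ∀ v : Fin (n + 1) → MvPolynomial (Fin m) K, Unim v →
      ERel (colm v) (colm (Pi.single 0 1)) := by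
  induction m with
  | zero =>
    intro v hv
    obtain ⟨i, hi⟩ := hv.exists_ne
    exact col_unit (by omega) v i (isUnit_zero_vars _ hi)
  | succ m ih =>
    intro v hv
    obtain ⟨i, hi⟩ := hv.exists_ne
    obtain ⟨σ, u, hu⟩ := exists_good_equiv (v i) hi
    have hv' : Unim (fun k => σ (v k)) := hv.map σ.toRingHom
    have hmon : (C (↑u⁻¹ : MvPolynomial (Fin m) K) * σ (v i)).Monic :=
      monic_C_mul_of_mul_leadingCoeff_eq_one (by rw [← hu]; simp)
    have h1 := col_poly hn (fun k => σ (v k)) i _ (Units.isUnit u⁻¹) hmon hv'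
    have h2 := (ih (fun k => (σ (v k)).eval 0) (hv'.map (evalRingHom 0))).map C
    have h3 : (colm fun k => (σ (v k)).eval 0).map C = colm fun k => C ((σ (v k)).eval 0) := rfl
    rw [h3] at h2
    have h4 := (h1.trans h2).map σ.symm.toRingHom
    convert h4 using 1
    · ext1 k l; simp [colm]
    · ext1 k l
      by_cases hk : k = 0
      · subst hk; simp [colm]
      · simp [colm, hk]

theorem DD.transfer {R S : Type*} [CommRing R] [CommRing S] (f : R ≃+* S) {a b : R}
    (h : DD (f a) (f b)) : DD a b := by
  intro c d hh
  have h1 := h (f c) (f d) (by rw [← map_mul, ← map_mul, ← map_sub, hh, map_one])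
  have h2 := elem_map (f.symm : S →+* R) h1
  convert h2 using 1
  apply Subtype.ext
  rw [coe_SLmap, blk_coe, blk_coe]
  ext i j
  fin_cases i <;> fin_cases j <;> simp

theorem blk_map {R S : Type*} [CommRing R] [CommRing S] (f : R →+* S) (a b c d : R)
    (h : a * d - b * c = 1) : (blk a b c d h : Matrix (Fin 3) (Fin 3) R).map f =
      (blk (f a) (f b) (f c) (f d) (by rw [← map_mul, ← map_mul, ← map_sub, h, map_one]) :
        Matrix (Fin 3) (Fin 3) S) := by
  rw [blk_coe, blk_coe]
  ext i j
  fin_cases i <;> fin_cases j <;> simp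

open Polynomial in
theorem DD_monic {R : Type*} [CommRing R] [IsDomain R] (ih : ∀ a b : R, DD a b) (p q : R[X])
    (hp : p.Monic) : DD p q := by
  intro c d h
  obtain ⟨E, hE, hEq⟩ := patch le_rfl (blk p q c d h : Matrix (Fin 3) (Fin 3) R[X]) (by
    intro P hP
    have hh : p.map (algebraMap R (Localization.AtPrime P)) *
        d.map (algebraMap R (Localization.AtPrime P)) -
        q.map (algebraMap R (Localization.AtPrime P)) *
        c.map (algebraMap R (Localization.AtPrime P)) = 1 := by
      rw [← Polynomial.map_mul, ← Polynomial.map_mul, ← Polynomial.map_sub, h,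
        Polynomial.map_one]
    refine ⟨_, DD_local _ _ _ (hp.map (algebraMap R (Localization.AtPrime P))) rfl _ _ hh,
      (1 : Matrix (Fin 3) (Fin 3) (Localization.AtPrime P)), ?_⟩
    rw [blk_map, Matrix.map_one _ C_0 C_1, Matrix.mul_one]; rfl)
  have h0 : p.eval 0 * d.eval 0 - q.eval 0 * c.eval 0 = 1 := by
    rw [← eval_mul, ← eval_mul, ← eval_sub, h, eval_one]
  have h1 := elem_map (C : R →+* R[X]) (ih _ _ _ _ h0)
  have e : blk p q c d h = E * Matrix.SpecialLinearGroup.map C (blk _ _ _ _ h0) := by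
    apply Subtype.ext
    rw [hEq, Matrix.SpecialLinearGroup.coe_mul, coe_SLmap, blk_map, blk_map]
    rfl
  rw [e]
  exact mul_mem hE h1

open Polynomial in
theorem DD_poly (K : Type*) [Field K] (m : ℕ) : ∀ p q : MvPolynomial (Fin m) K, DD p q := by
  induction m with
  | zero =>
    intro p q
    by_cases hp : p = 0
    · intro c d h
      rw [hp] at h
      have hq : IsUnit q := IsUnit.of_mul_eq_one (-c) (by linear_combination h)
      exact DD.unit_right p hq c d _
    · exact DD.unit_left q (isUnit_zero_vars _ hp)
  | succ m ih =>
    intro p q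
    by_cases hp : p = 0
    · intro c d h
      have h' := h
      rw [hp] at h'
      have hq : IsUnit q := IsUnit.of_mul_eq_one (-c) (by linear_combination h')
      exact DD.unit_right p hq c d _
    obtain ⟨σ, u, hu⟩ := exists_good_equiv p hp
    apply DD.transfer σ
    have hmon : (C (↑u⁻¹ : MvPolynomial (Fin m) K) * σ p).Monic :=
      monic_C_mul_of_mul_leadingCoeff_eq_one (by rw [← hu]; simp)
    have h1 : DD (C (u : MvPolynomial (Fin m) K)) (σ q) := DD.unit_left _ (u.isUnit.map C)
    have h2 := h1.mul (DD_monic ih _ (σ q) hmon)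
    rw [← mul_assoc, ← C_mul] at h2
    simpa using h2

/-- The matrix `1 ⊕ A`. -/
def embM {n : ℕ} {R : Type*} [CommRing R] (A : Matrix (Fin n) (Fin n) R) :
    Matrix (Fin (n + 1)) (Fin (n + 1)) R :=
  Matrix.of fun i j => Fin.cases (motive := fun _ => R)
    (Fin.cases (motive := fun _ => R) 1 (fun _ => 0) j)
    (fun i' => Fin.cases (motive := fun _ => R) 0 (fun j' => A i' j') j) i

theorem embM_00 {n : ℕ} {R : Type*} [CommRing R] (A : Matrix (Fin n) (Fin n) R) :
    embM A 0 0 = 1 := rfl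

theorem embM_zs {n : ℕ} {R : Type*} [CommRing R] (A : Matrix (Fin n) (Fin n) R) (j : Fin n) :
    embM A 0 j.succ = 0 := rfl

theorem embM_s0 {n : ℕ} {R : Type*} [CommRing R] (A : Matrix (Fin n) (Fin n) R) (i : Fin n) :
    embM A i.succ 0 = 0 := rfl

theorem embM_ss {n : ℕ} {R : Type*} [CommRing R] (A : Matrix (Fin n) (Fin n) R) (i j : Fin n) :
    embM A i.succ j.succ = A i j := rfl

theorem det_of_col {n : ℕ} {R : Type*} [CommRing R] (B : Matrix (Fin (n + 1)) (Fin (n + 1)) R)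
    (h0 : B 0 0 = 1) (hs : ∀ i : Fin n, B i.succ 0 = 0) :
    B.det = (B.submatrix Fin.succ Fin.succ).det := by
  rw [Matrix.det_succ_column_zero, Fin.sum_univ_succ]
  simp [h0, hs]

/-- The element `1 ⊕ A`. -/
def emb {n : ℕ} {R : Type*} [CommRing R] (A : Matrix.SpecialLinearGroup (Fin n) R) :
    Matrix.SpecialLinearGroup (Fin (n + 1)) R :=
  ⟨embM (A : Matrix (Fin n) (Fin n) R), by
    rw [det_of_col _ (embM_00 _) (embM_s0 _)]
    exact A.det_coe⟩

theorem emb_coe {n : ℕ} {R : Type*} [CommRing R] (A : Matrix.SpecialLinearGroup (Fin n) R) :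
    (emb A : Matrix (Fin (n + 1)) (Fin (n + 1)) R) = embM (A : Matrix (Fin n) (Fin n) R) := rfl

theorem emb_mul {n : ℕ} {R : Type*} [CommRing R] (A B : Matrix.SpecialLinearGroup (Fin n) R) :
    emb (A * B) = emb A * emb B := by
  apply Subtype.ext
  rw [Matrix.SpecialLinearGroup.coe_mul, emb_coe, emb_coe, emb_coe,
    Matrix.SpecialLinearGroup.coe_mul]
  ext i j
  rw [Matrix.mul_apply, Fin.sum_univ_succ]
  cases i using Fin.cases <;> cases j using Fin.cases <;>
    simp [embM_00, embM_zs, embM_s0, embM_ss, Matrix.mul_apply]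

theorem emb_one {n : ℕ} {R : Type*} [CommRing R] :
    emb (1 : Matrix.SpecialLinearGroup (Fin n) R) = 1 := by
  have h := emb_mul (1 : Matrix.SpecialLinearGroup (Fin n) R) 1
  rw [mul_one] at h
  exact (mul_eq_left.1 h.symm)

theorem emb_el {n : ℕ} {R : Type*} [CommRing R] {i j : Fin n} (h : i ≠ j) (a : R) :
    emb (el h a) = el (fun e => h (Fin.succ_injective _ e)) a := by
  apply Subtype.ext
  rw [emb_coe, el_coe, el_coe]
  ext k l
  cases k using Fin.cases <;> cases l using Fin.cases <;>
    simp [embM_00, embM_zs, embM_s0, embM_ss, Matrix.single_apply, Matrix.one_apply,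
      Fin.succ_ne_zero, (Fin.succ_ne_zero _).symm]

theorem emb_mem {n : ℕ} {R : Type*} [CommRing R] {x : Matrix.SpecialLinearGroup (Fin n) R}
    (hx : x ∈ elemSL n R) : emb x ∈ elemSL (n + 1) R := by
  refine elem_induction (p := fun x => emb x ∈ elemSL (n + 1) R) ?_ ?_ ?_ ?_ hx
  · intro i j h a; rw [emb_el]; exact el_mem _ _
  · rw [emb_one]; exact one_mem _
  · intro x y _ _ h1 h2; rw [emb_mul]; exact mul_mem h1 h2
  · intro x _ h1
    have : emb x⁻¹ = (emb x)⁻¹ := by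
      rw [eq_inv_iff_mul_eq_one, ← emb_mul, inv_mul_cancel, emb_one]
    rw [this]; exact inv_mem h1

theorem row_mem {n : ℕ} {R : Type*} [CommRing R] (r : Fin (n + 1) → R) (s : Finset (Fin (n + 1))) :
    0 ∉ s → ∃ M ∈ elemSL (n + 1) R, (M : Matrix (Fin (n + 1)) (Fin (n + 1)) R) =
      Matrix.of fun i j => (1 : Matrix (Fin (n + 1)) (Fin (n + 1)) R) i j +
        if i = 0 ∧ j ∈ s then r j else 0 := by
  induction s using Finset.induction_on with
  | empty =>
    intro _
    exact ⟨1, one_mem _, by ext i j; simp⟩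
  | insert a s ha ih =>
    intro h
    rw [Finset.mem_insert, not_or] at h
    obtain ⟨M, hM, hMe⟩ := ih h.2
    refine ⟨M * el h.1 (r a), mul_mem hM (el_mem _ _), ?_⟩
    have e : (el h.1 (r a) : Matrix (Fin (n + 1)) (Fin (n + 1)) R) =
      Matrix.transvection 0 a (r a) := rfl
    rw [Matrix.SpecialLinearGroup.coe_mul, hMe, e]
    ext i j
    by_cases hj : j = a
    · subst hj
      rw [Matrix.mul_transvection_apply_same]
      by_cases hi : i = 0
      · subst hi; simp [ha, h.2]
      · simp [hi]
    · rw [Matrix.mul_transvection_apply_of_ne _ _ _ _ hj]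
      simp [hj]

theorem mem_of_col {n : ℕ} {R : Type*} [CommRing R]
    (hcol : ∀ v : Fin (n + 1) → R, Unim v → ERel (colm v) (colm (Pi.single 0 1)))
    (hemb : ∀ A : Matrix.SpecialLinearGroup (Fin n) R, emb A ∈ elemSL (n + 1) R)
    (g : Matrix.SpecialLinearGroup (Fin (n + 1)) R) : g ∈ elemSL (n + 1) R := by
  have hv : Unim (fun k => (g : Matrix (Fin (n + 1)) (Fin (n + 1)) R) k 0) := by
    refine ⟨fun k => ((g⁻¹ : Matrix.SpecialLinearGroup (Fin (n + 1)) R) :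
      Matrix (Fin (n + 1)) (Fin (n + 1)) R) 0 k, ?_⟩
    have h : ((g⁻¹ * g : Matrix.SpecialLinearGroup (Fin (n + 1)) R) :
      Matrix (Fin (n + 1)) (Fin (n + 1)) R) 0 0 = 1 := by
      rw [inv_mul_cancel]; simp
    rw [Matrix.SpecialLinearGroup.coe_mul, Matrix.mul_apply] at h
    exact h
  obtain ⟨M, hM, hMe⟩ := (hcol _ hv).symm
  rw [← Subgroup.mul_mem_cancel_left _ hM]
  set B := M * g with hB
  have hB0 : ∀ k, (B : Matrix (Fin (n + 1)) (Fin (n + 1)) R) k 0 =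
      (Pi.single 0 1 : Fin (n + 1) → R) k := by
    intro k
    have := congrFun (congrFun hMe k) ()
    rw [hB, Matrix.SpecialLinearGroup.coe_mul, Matrix.mul_apply]
    rw [Matrix.mul_apply] at this
    exact this.symm
  clear_value B
  have h00 : (B : Matrix (Fin (n + 1)) (Fin (n + 1)) R) 0 0 = 1 := by rw [hB0]; simp
  have hs0 : ∀ i : Fin n, (B : Matrix (Fin (n + 1)) (Fin (n + 1)) R) i.succ 0 = 0 := by
    intro i; rw [hB0]; simp
  have hdet := det_of_col (B : Matrix (Fin (n + 1)) (Fin (n + 1)) R) h00 hs0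
  rw [B.det_coe] at hdet
  obtain ⟨U, hU, hUe⟩ := row_mem (fun j => (B : Matrix (Fin (n + 1)) (Fin (n + 1)) R) 0 j)
    (Finset.univ.erase 0) (by simp)
  obtain ⟨A, hA⟩ : ∃ A : Matrix.SpecialLinearGroup (Fin n) R, (A : Matrix (Fin n) (Fin n) R) =
      (B : Matrix (Fin (n + 1)) (Fin (n + 1)) R).submatrix Fin.succ Fin.succ :=
    ⟨⟨_, hdet.symm⟩, rfl⟩
  have e : B = emb A * U := by
    apply Subtype.ext
    rw [Matrix.SpecialLinearGroup.coe_mul, hUe, emb_coe, hA]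
    ext i j
    rw [Matrix.mul_apply, Fin.sum_univ_succ]
    cases i using Fin.cases <;> cases j using Fin.cases <;>
      simp [embM_00, embM_zs, embM_s0, embM_ss, h00, hs0, Matrix.one_apply, Fin.succ_ne_zero,
        (Fin.succ_ne_zero _).symm]
  rw [e]
  exact mul_mem (hemb _) hU

theorem emb_two {R : Type*} [CommRing R] (h : ∀ a b : R, DD a b)
    (A : Matrix.SpecialLinearGroup (Fin 2) R) : emb A ∈ elemSL 3 R := by
  have hd := A.det_coe
  rw [Matrix.det_fin_two] at hd
  have e : emb A = blk _ _ _ _ hd := by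
    apply Subtype.ext
    rw [emb_coe, blk_coe]
    ext i j
    fin_cases i <;> fin_cases j <;> rfl
  rw [e]
  exact h _ _ _ _ _

theorem SL_poly_aux (K : Type*) [Field K] (m n : ℕ) :
    ∀ g : Matrix.SpecialLinearGroup (Fin (n + 3)) (MvPolynomial (Fin m) K),
      g ∈ elemSL (n + 3) (MvPolynomial (Fin m) K) := by
  induction n with
  | zero =>
    exact mem_of_col (col_trans 2 le_rfl K m) (emb_two (DD_poly K m))
  | succ n ih =>
    exact mem_of_col (col_trans (n + 3) (by omega) K m) (fun A => emb_mem (ih A))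

/-- Suslin's structure theorem: `SL_n(K[x₁,…,x_m]) = E_n(K[x₁,…,x_m])` for a field `K`
and `n ≥ 3`; in particular `K₁^{SL_n}` of a polynomial ring over a field is trivial. -/
theorem SL_poly_eq_elementary (n : ℕ) (hn : 3 ≤ n) (K : Type*) [Field K] (m : ℕ) :
    ∀ g : Matrix.SpecialLinearGroup (Fin n) (MvPolynomial (Fin m) K),
      g ∈ elemSL n (MvPolynomial (Fin m) K) := by
  obtain ⟨k, rfl⟩ : ∃ k, n = k + 3 := ⟨n - 3, by omega⟩
  exact SL_poly_aux K m k
end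

section
/- Let A be a commutative ring, h ∈ A[x] a monic polynomial with h(1) a unit in A, and n ≥ 3. If g ∈ GL_n(A[x]) satisfies that the image of g in GL_n(A[x]_h) lies in E_n(A[x]_h) and g(0) = 1, then g ∈ E_n(A[x]) and in particular g(1) ∈ E_n(A). -/
/-- The elementary subgroup `E_n(R) ⊆ GL_n(R)`. -/
def elemGL (n : ℕ) (R : Type*) [CommRing R] : Subgroup (GL (Fin n) R) :=
  Subgroup.closure {g | ∃ (i j : Fin n) (a : R), i ≠ j ∧
    (g : Matrix (Fin n) (Fin n) R) = Matrix.transvection i j a}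

/-- The homomorphism `GL_n(R) → GL_n(S)` induced by a ring homomorphism. -/
def glMap {n : ℕ} {R S : Type*} [CommRing R] [CommRing S] (f : R →+* S) :
    GL (Fin n) R →* GL (Fin n) S := Units.map (RingHom.mapMatrix f).toMonoidHom


namespace MonicLoc

open Matrix

variable {n : ℕ} {R S T : Type*} [CommRing R] [CommRing S] [CommRing T]

lemma glMap_val (f : R →+* S) (x : GL (Fin n) R) :
    (glMap f x : Matrix (Fin n) (Fin n) S) = (x : Matrix (Fin n) (Fin n) R).map f := rfl

lemma glMap_comp (f : S →+* T) (g : R →+* S) (x : GL (Fin n) R) :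
    glMap f (glMap g x) = glMap (f.comp g) x := by
  apply Units.ext
  rfl

/-- The elementary matrix as an element of the general linear group. -/
def el (i j : Fin n) (hij : i ≠ j) (a : R) : GL (Fin n) R where
  val := transvection i j a
  inv := transvection i j (-a)
  val_inv := by rw [transvection_mul_transvection_same _ _ hij]; simp
  inv_val := by rw [transvection_mul_transvection_same _ _ hij]; simp

lemma el_val (i j : Fin n) (hij : i ≠ j) (a : R) :
    (el i j hij a : Matrix (Fin n) (Fin n) R) = transvection i j a := rfl

lemma el_mem (i j : Fin n) (hij : i ≠ j) (a : R) : el i j hij a ∈ elemGL n R :=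
  Subgroup.subset_closure ⟨i, j, a, hij, rfl⟩

lemma el_inv (i j : Fin n) (hij : i ≠ j) (a : R) : (el i j hij a)⁻¹ = el i j hij (-a) := by
  apply Units.ext
  rfl

lemma el_mul (i j : Fin n) (hij : i ≠ j) (a b : R) :
    el i j hij a * el i j hij b = el i j hij (a + b) := by
  apply Units.ext
  exact transvection_mul_transvection_same _ _ hij a b

lemma glMap_el (f : R →+* S) (i j : Fin n) (hij : i ≠ j) (a : R) :
    glMap f (el i j hij a) = el i j hij (f a) := by
  apply Units.ext
  rw [glMap_val, el_val, el_val, transvection, transvection]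
  ext k l
  simp [Matrix.single_apply, Matrix.one_apply, apply_ite f]

/-- Left induction principle for the elementary group. -/
lemma elem_induction_left {p : GL (Fin n) R → Prop} (h1 : p 1)
    (hm : ∀ i j hij a x, x ∈ elemGL n R → p x → p (el i j hij a * x))
    {x : GL (Fin n) R} (hx : x ∈ elemGL n R) : p x := by
  refine Subgroup.closure_induction_left (p := fun x _ => p x) h1 ?_ ?_ hx
  · rintro x ⟨i, j, a, hij, hxe⟩ y hy hp
    have : x = el i j hij a := Units.ext hxe
    rw [this]; exact hm _ _ _ _ _ hy hp
  · rintro x ⟨i, j, a, hij, hxe⟩ y hy hp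
    have : x = el i j hij a := Units.ext hxe
    rw [this, el_inv]; exact hm _ _ _ _ _ hy hp

/-- Right induction principle for the elementary group. -/
lemma elem_induction_right {p : GL (Fin n) R → Prop} (h1 : p 1)
    (hm : ∀ i j hij a x, x ∈ elemGL n R → p x → p (x * el i j hij a))
    {x : GL (Fin n) R} (hx : x ∈ elemGL n R) : p x := by
  refine Subgroup.closure_induction_right (p := fun x _ => p x) h1 ?_ ?_ hx
  · rintro y hy x ⟨i, j, a, hij, hxe⟩ hp
    have : x = el i j hij a := Units.ext hxe
    rw [this]; exact hm _ _ _ _ _ hy hp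
  · rintro y hy x ⟨i, j, a, hij, hxe⟩ hp
    have : x = el i j hij a := Units.ext hxe
    rw [this, el_inv]; exact hm _ _ _ _ _ hy hp

lemma elem_map (f : R →+* S) {x : GL (Fin n) R} (hx : x ∈ elemGL n R) :
    glMap f x ∈ elemGL n S := by
  refine elem_induction_left (p := fun x => glMap f x ∈ elemGL n S) ?_ ?_ hx
  · rw [map_one]; exact one_mem _
  · intro i j hij a x hx ih
    rw [map_mul, glMap_el]
    exact mul_mem (el_mem _ _ _ _) ih

/-- Rows `ρ` orthogonal to `v` such that `1 + v ρ` lies in the subgroup `K`. -/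
def rowSet (K : Subgroup (GL (Fin n) R)) (v : Fin n → R) : AddSubgroup (Fin n → R) where
  carrier := {ρ | ρ ⬝ᵥ v = 0 ∧ ∃ x ∈ K, (x : Matrix (Fin n) (Fin n) R) = 1 + vecMulVec v ρ}
  zero_mem' := ⟨by simp, 1, one_mem _, by simp⟩
  add_mem' := by
    rintro ρ σ ⟨h1, x, hx, hxe⟩ ⟨h2, y, hy, hye⟩
    refine ⟨by rw [add_dotProduct, h1, h2, add_zero], x * y, mul_mem hx hy, ?_⟩
    rw [Units.val_mul, hxe, hye, mul_add, add_mul, add_mul, vecMulVec_mul_vecMulVec, h1,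
      vecMulVec_add]
    simp [add_assoc]
  neg_mem' := by
    rintro ρ ⟨h1, x, hx, hxe⟩
    refine ⟨by rw [neg_dotProduct, h1, neg_zero], x⁻¹, inv_mem hx, ?_⟩
    rw [Units.inv_eq_of_mul_eq_one_right (a := 1 + vecMulVec v (-ρ))]
    rw [hxe, mul_add, add_mul, add_mul, vecMulVec_mul_vecMulVec, h1, vecMulVec_neg]
    simp

/-- Columns `v` orthogonal to `ρ` such that `1 + v ρ` lies in the subgroup `K`. -/
def colSet (K : Subgroup (GL (Fin n) R)) (ρ : Fin n → R) : AddSubgroup (Fin n → R) where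
  carrier := {v | ρ ⬝ᵥ v = 0 ∧ ∃ x ∈ K, (x : Matrix (Fin n) (Fin n) R) = 1 + vecMulVec v ρ}
  zero_mem' := ⟨by simp, 1, one_mem _, by simp⟩
  add_mem' := by
    rintro v w ⟨h1, x, hx, hxe⟩ ⟨h2, y, hy, hye⟩
    refine ⟨by rw [dotProduct_add, h1, h2, add_zero], x * y, mul_mem hx hy, ?_⟩
    rw [Units.val_mul, hxe, hye, mul_add, add_mul, add_mul, vecMulVec_mul_vecMulVec, h2,
      add_vecMulVec]
    simp [add_assoc]
  neg_mem' := by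
    rintro v ⟨h1, x, hx, hxe⟩
    refine ⟨by rw [dotProduct_neg, h1, neg_zero], x⁻¹, inv_mem hx, ?_⟩
    rw [Units.inv_eq_of_mul_eq_one_right (a := 1 + vecMulVec (-v) ρ)]
    rw [hxe, mul_add, add_mul, add_mul, vecMulVec_mul_vecMulVec, dotProduct_neg, h1,
      neg_vecMulVec]
    simp

lemma transvection_eq (i j : Fin n) (a : R) :
    transvection i j a = 1 + vecMulVec (Pi.single i 1) (Pi.single j a) := by
  rw [transvection]
  congr 1
  ext k l
  simp only [Matrix.single_apply, vecMulVec_apply, Pi.single_apply, eq_comm]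
  split_ifs <;> simp_all

lemma transvection_eq' (i j : Fin n) (a : R) :
    transvection i j a = 1 + vecMulVec (Pi.single i a) (Pi.single j 1) := by
  rw [transvection]
  congr 1
  ext k l
  simp only [Matrix.single_apply, vecMulVec_apply, Pi.single_apply, eq_comm]
  split_ifs <;> simp_all

lemma row_mem (K : Subgroup (GL (Fin n) R)) (i : Fin n) (ρ : Fin n → R) (h : ρ i = 0)
    (hK : ∀ j (hij : i ≠ j), el i j hij (ρ j) ∈ K) : ρ ∈ rowSet K (Pi.single i 1) := by
  have : ρ = ∑ j, Pi.single j (ρ j) := by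
    rw [Finset.univ_sum_single]
  rw [this]
  refine sum_mem fun j _ => ?_
  by_cases hij : i = j
  · subst hij
    rw [h, Pi.single_zero]; exact zero_mem _
  · exact ⟨by simp [Pi.single_apply, hij], el i j hij (ρ j), hK j hij, transvection_eq _ _ _⟩

lemma col_mem (i : Fin n) (v : Fin n → R) (h : v i = 0) :
    v ∈ colSet (elemGL n R) (Pi.single i 1) := by
  have : v = ∑ j, Pi.single j (v j) := by
    rw [Finset.univ_sum_single]
  rw [this]
  refine sum_mem fun j _ => ?_
  by_cases hij : j = i
  · subst hij
    rw [h, Pi.single_zero]; exact zero_mem _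
  · exact ⟨by simp [Pi.single_apply, Ne.symm hij], el j i hij (v j), el_mem _ _ _ _,
      transvection_eq' _ _ _⟩

lemma exists_third (hn : 3 ≤ n) (k l : Fin n) : ∃ m, m ≠ k ∧ m ≠ l := by
  by_contra! hc
  have : (Finset.univ : Finset (Fin n)) ⊆ {k, l} := by
    intro m _
    simp only [Finset.mem_insert, Finset.mem_singleton]
    by_cases h : m = k
    · exact Or.inl h
    · exact Or.inr (hc m h)
  have h2 := Finset.card_le_card this
  have h3 := Finset.card_le_two (a := k) (b := l)
  simp at h2
  omega

/-- Suslin's lemma. -/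
lemma suslin (hn : 3 ≤ n) (v : Fin n → R) (c : R) (k l : Fin n) (hkl : k ≠ l) :
    c • v ∈ colSet (elemGL n R) (Pi.single k (v l) - Pi.single l (v k)) := by
  set ρ : Fin n → R := Pi.single k (v l) - Pi.single l (v k) with hρ
  obtain ⟨m, hmk, hml⟩ := exists_third hn k l
  have hρi : ∀ i, i ≠ k → i ≠ l → ρ i = 0 := by
    intro i h1 h2; simp [hρ, Pi.single_apply, h1, h2]
  set v' : Fin n → R := Pi.single k (v k) + Pi.single l (v l) with hv'
  have hρv' : ρ ⬝ᵥ v' = 0 := by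
    simp [hρ, hv', Pi.single_apply, hkl, hkl.symm, sub_dotProduct]; ring
  have h1 : c • v' ∈ colSet (elemGL n R) ρ := by
    refine ⟨by rw [dotProduct_smul, hρv', smul_zero], ?_⟩
    obtain ⟨-, x, hx, hxe⟩ := col_mem (R := R) m v' (by simp [hv', Pi.single_apply, hmk, hml])
    obtain ⟨-, x', hx', hxe'⟩ := neg_mem (col_mem (R := R) m v' (by
      simp [hv', Pi.single_apply, hmk, hml]))
    obtain ⟨-, y, hy, hye⟩ := row_mem (elemGL n R) m (c • ρ) (by simp [hρi m hmk hml])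
      (fun j hij => el_mem _ _ _ _)
    obtain ⟨-, y', hy', hye'⟩ := neg_mem (row_mem (elemGL n R) m (c • ρ)
      (by simp [hρi m hmk hml]) (fun j hij => el_mem _ _ _ _))
    refine ⟨x * y * x' * y', mul_mem (mul_mem (mul_mem hx hy) hx') hy', ?_⟩
    set a := vecMulVec v' (Pi.single m (1 : R)) with ha
    set b := vecMulVec (Pi.single m (1 : R)) (c • ρ) with hb
    have haa : a * a = 0 := by
      rw [ha, vecMulVec_mul_vecMulVec]
      simp [hv', Pi.single_apply, hmk, hml]
    have hbb : b * b = 0 := by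
      rw [hb, vecMulVec_mul_vecMulVec]
      simp [hρi m hmk hml]
    have hba : b * a = 0 := by
      rw [ha, hb, vecMulVec_mul_vecMulVec]
      simp [hρv']
    have hab : a * b = vecMulVec (c • v') ρ := by
      rw [ha, hb, vecMulVec_mul_vecMulVec]
      simp [smul_vecMulVec, vecMulVec_smul]
    rw [← hab]
    simp only [Units.val_mul, hxe, hxe', hye, hye', vecMulVec_neg, neg_vecMulVec, ← ha, ← hb]
    have e1 : (1 + a) * (1 + b) * (1 + -a) * (1 + -b) =
      1 + a * b - a * a - b * b - b * a - a * (b * b) - a * (b * a) + a * (a * b)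
        + (b * a) * b + a * (b * a) * b := by noncomm_ring
    rw [e1, haa, hbb, hba, ← mul_assoc a a b, haa]
    simp
  have h2 : c • v = c • v' + ∑ i, (if i = k ∨ i = l then 0 else Pi.single i (c * v i)) := by
    ext i
    simp only [Pi.smul_apply, Pi.add_apply, Finset.sum_apply, hv', smul_eq_mul]
    rw [Finset.sum_eq_single i]
    · by_cases hk : i = k
      · subst hk; simp [Pi.single_apply, hkl]
      · by_cases hl : i = l
        · subst hl; simp [Pi.single_apply, hkl.symm]
        · simp [hk, hl, Pi.single_apply]
    · intro j _ hj
      split_ifs <;> simp [Pi.single_apply, Ne.symm hj]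
    · simp
  rw [h2]
  refine add_mem h1 (sum_mem fun i _ => ?_)
  split_ifs with h
  · exact zero_mem _
  · push Not at h
    have hi := hρi i h.1 h.2
    refine ⟨by simp [hi], ?_⟩
    obtain ⟨-, y, hy, hye⟩ := row_mem (elemGL n R) i ((c * v i) • ρ) (by simp [hi])
      (fun j hij => el_mem _ _ _ _)
    refine ⟨y, hy, ?_⟩
    rw [hye, vecMulVec_smul, ← smul_vecMulVec]
    congr 2
    rw [← Pi.single_smul]; simp

lemma row_decomp (v u w : Fin n → R) (huv : u ⬝ᵥ v = 0) (hwv : w ⬝ᵥ v = 1) (a : R) :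
    a • u = ∑ k, ∑ l, (a * (u k * w l)) • (Pi.single k (v l) - Pi.single l (v k)) := by
  ext i
  simp only [Finset.sum_apply, Pi.smul_apply, Pi.sub_apply, smul_eq_mul, mul_sub,
    Finset.sum_sub_distrib]
  have e1 : ∑ k, ∑ l, a * (u k * w l) * (Pi.single k (v l) : Fin n → R) i = a * u i := by
    rw [Finset.sum_eq_single i]
    · simp only [Pi.single_eq_same]
      have : ∑ l, a * (u i * w l) * v l = a * u i * (w ⬝ᵥ v) := by
        rw [dotProduct, Finset.mul_sum]
        exact Finset.sum_congr rfl fun _ _ => by ring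
      rw [this, hwv, mul_one]
    · intro k _ hk
      simp [Pi.single_apply, Ne.symm hk]
    · simp
  have e2 : ∑ k, ∑ l, a * (u k * w l) * (Pi.single l (v k) : Fin n → R) i = 0 := by
    rw [Finset.sum_comm, Finset.sum_eq_single i]
    · simp only [Pi.single_eq_same]
      have : ∑ k, a * (u k * w i) * v k = a * w i * (u ⬝ᵥ v) := by
        rw [dotProduct, Finset.mul_sum]
        exact Finset.sum_congr rfl fun _ _ => by ring
      rw [this, huv, mul_zero]
    · intro k _ hk
      simp [Pi.single_apply, Ne.symm hk]
    · simp
  rw [e1, e2, sub_zero]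

lemma conj_el_val (γ : GL (Fin n) R) (i j : Fin n) (hij : i ≠ j) (a : R) :
    ((γ * el i j hij a * γ⁻¹ : GL (Fin n) R) : Matrix (Fin n) (Fin n) R) =
      1 + vecMulVec (fun k => γ k i) (a • fun l => (γ⁻¹ : GL (Fin n) R) j l) := by
  rw [Units.val_mul, Units.val_mul, el_val, transvection_eq', mul_add, add_mul, mul_one,
    ← Units.val_mul, mul_inv_cancel]
  congr 1
  rw [mul_vecMulVec, vecMulVec_mul]
  ext k l
  simp [vecMulVec_apply, mulVec_single]
  ring

lemma conj_dot (γ : GL (Fin n) R) (i j : Fin n) :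
    (fun l => (γ⁻¹ : GL (Fin n) R) j l) ⬝ᵥ (fun k => γ k i) = if j = i then 1 else 0 := by
  have : ((γ⁻¹ * γ : GL (Fin n) R) : Matrix (Fin n) (Fin n) R) j i = if j = i then 1 else 0 := by
    rw [inv_mul_cancel, Units.val_one, one_apply]
  rw [← this, Units.val_mul, mul_apply]
  rfl

/-- Criterion for a conjugate of an elementary matrix to lie in `K`. -/
lemma conj_crit (K : Subgroup (GL (Fin n) R)) (γ : GL (Fin n) R) (i j : Fin n) (hij : i ≠ j)
    (a : R)
    (hK : ∀ k l, k ≠ l → (a * ((γ⁻¹ : GL (Fin n) R) j k * (γ⁻¹ : GL (Fin n) R) i l)) •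
      (Pi.single k (γ l i) - Pi.single l (γ k i)) ∈ rowSet K (fun k => γ k i)) :
    γ * el i j hij a * γ⁻¹ ∈ K := by
  have h1 := row_decomp (fun k => γ k i) (fun l => (γ⁻¹ : GL (Fin n) R) j l)
    (fun l => (γ⁻¹ : GL (Fin n) R) i l) (by rw [conj_dot, if_neg hij.symm])
    (by rw [conj_dot, if_pos rfl]) a
  have h2 : a • (fun l => (γ⁻¹ : GL (Fin n) R) j l) ∈ rowSet K (fun k => γ k i) := by
    rw [h1]
    refine sum_mem fun k _ => sum_mem fun l _ => ?_
    by_cases hkl : k = l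
    · subst hkl; rw [sub_self, smul_zero]; exact zero_mem _
    · exact hK k l hkl
  obtain ⟨-, x, hx, hxe⟩ := h2
  have : γ * el i j hij a * γ⁻¹ = x := Units.ext (by rw [conj_el_val, hxe])
  rw [this]; exact hx

lemma col_to_row (K : Subgroup (GL (Fin n) R)) (v ρ : Fin n → R) (c : R) (h0 : ρ ⬝ᵥ v = 0)
    (h : c • v ∈ colSet K ρ) : c • ρ ∈ rowSet K v := by
  obtain ⟨-, x, hx, hxe⟩ := h
  exact ⟨by rw [smul_dotProduct, h0, smul_zero], x, hx, by
    rw [hxe, smul_vecMulVec, vecMulVec_smul]⟩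

lemma suslin_dot (v : Fin n → R) (k l : Fin n) :
    (Pi.single k (v l) - Pi.single l (v k)) ⬝ᵥ v = 0 := by
  simp [sub_dotProduct]; ring

lemma normal_el (hn : 3 ≤ n) (γ : GL (Fin n) R) (i j : Fin n) (hij : i ≠ j) (a : R) :
    γ * el i j hij a * γ⁻¹ ∈ elemGL n R := by
  refine conj_crit (elemGL n R) γ i j hij a fun k l hkl => ?_
  have h1 := suslin hn (fun k => γ k i)
    (a * ((γ⁻¹ : GL (Fin n) R) j k * (γ⁻¹ : GL (Fin n) R) i l)) k l hkl
  have h2 := suslin_dot (fun k => γ k i) k l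
  exact col_to_row (elemGL n R) _ _ _ h2 h1

lemma elem_normal (hn : 3 ≤ n) (γ x : GL (Fin n) R) (hx : x ∈ elemGL n R) :
    γ * x * γ⁻¹ ∈ elemGL n R := by
  refine elem_induction_left (p := fun x => γ * x * γ⁻¹ ∈ elemGL n R) ?_ ?_ hx
  · simp
  · intro i j hij a x hx ih
    have : γ * (el i j hij a * x) * γ⁻¹ = (γ * el i j hij a * γ⁻¹) * (γ * x * γ⁻¹) := by group
    rw [this]
    exact mul_mem (normal_el hn _ _ _ _ _) ih

section Dilation

open Polynomial

/-- Substitution `X ↦ s X`. -/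
noncomputable def sub (s : R) : R[X] →+* R[X] := Polynomial.compRingHom (C s * X)

/-- Evaluation at zero. -/
noncomputable def ev0 : R[X] →+* R := Polynomial.evalRingHom 0

lemma sub_apply (s : R) (p : R[X]) : sub s p = p.comp (C s * X) := rfl

lemma ev0_apply (p : R[X]) : ev0 p = p.eval 0 := rfl

lemma sub_comp_sub (r s : R) : (sub s).comp (sub r) = sub (r * s) := by
  apply Polynomial.ringHom_ext
  · intro a; simp [sub_apply]
  · simp [sub_apply, mul_assoc]

lemma map_comp_sub (f : R →+* S) (s : R) :
    (mapRingHom f).comp (sub s) = (sub (f s)).comp (mapRingHom f) := by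
  apply Polynomial.ringHom_ext
  · intro a; simp [sub_apply]
  · simp [sub_apply]

lemma ev0_comp_sub (s : R) : (ev0 : R[X] →+* R).comp (sub s) = ev0 := by
  apply Polynomial.ringHom_ext
  · intro a; simp [sub_apply, ev0_apply]
  · simp [sub_apply, ev0_apply]

lemma sub_comp_C (s : R) : (sub s).comp (C : R →+* R[X]) = C := by
  ext a; simp [sub_apply]

lemma ev0_comp_C : (ev0 : R[X] →+* R).comp C = RingHom.id R := by
  ext a; simp [ev0_apply]

lemma glMap_id (x : GL (Fin n) R) : glMap (RingHom.id R) x = x := by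
  apply Units.ext; rw [glMap_val]; ext i j; simp

/-- Images of the elementary matrices over `R[X]` which are trivial at `X = 0`. -/
noncomputable def KD (n : ℕ) (f : R →+* S) : Subgroup (GL (Fin n) S[X]) :=
  ((elemGL n R[X]) ⊓ (glMap ev0).ker).map (glMap (mapRingHom f))

lemma KD_sub (f : R →+* S) (s : R) {x : GL (Fin n) S[X]} (hx : x ∈ KD n f) :
    glMap (sub (f s)) x ∈ KD n f := by
  obtain ⟨y, ⟨hy1, hy2⟩, rfl⟩ := hx
  refine ⟨glMap (sub s) y, ⟨elem_map _ hy1, ?_⟩, ?_⟩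
  · change _ ∈ (glMap ev0).ker
    change _ ∈ (glMap ev0).ker at hy2
    rw [MonoidHom.mem_ker] at hy2 ⊢
    rw [glMap_comp, ev0_comp_sub, hy2]
  · rw [glMap_comp, glMap_comp, map_comp_sub]

lemma finite_prod {ι : Type*} [Finite ι] (M : Submonoid R) (P : ι → R → Prop)
    (h1 : ∀ a, ∃ s ∈ M, P a s) (h2 : ∀ a s r, r ∈ M → P a s → P a (s * r)) :
    ∃ s ∈ M, ∀ a, P a s := by
  classical
  cases nonempty_fintype ι
  choose s hs hP using h1
  refine ⟨∏ a, s a, prod_mem fun a _ => hs a, fun a => ?_⟩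
  rw [← Finset.mul_prod_erase _ _ (Finset.mem_univ a)]
  exact h2 _ _ _ (prod_mem fun a _ => hs a) (hP a)

variable (M : Submonoid R) [Algebra R S] [IsLocalization M S]

lemma clear (c : S[X]) (hc : c.eval 0 = 0) :
    ∃ s ∈ M, ∃ c' : R[X], c'.eval 0 = 0 ∧
      c'.map (algebraMap R S) = sub (algebraMap R S s) c := by
  obtain ⟨d, rfl⟩ : X ∣ c := by
    rw [X_dvd_iff, coeff_zero_eq_eval_zero]; exact hc
  obtain ⟨b, hbM, hb⟩ := IsLocalization.integerNormalization_spec M d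
  set N := IsLocalization.integerNormalization M d
  have hN : N.map (algebraMap R S) = C (algebraMap R S b) * d := by
    ext k
    rw [hb, coeff_C_mul, coeff_smul, Algebra.smul_def]
  refine ⟨b, hbM, X * sub (b : R) N, by simp, ?_⟩
  rw [Polynomial.map_mul, map_X]
  have := congrArg (fun φ => φ N) (map_comp_sub (algebraMap R S) (b : R))
  simp only [RingHom.comp_apply, coe_mapRingHom] at this
  rw [this, hN]
  simp [sub_apply]
  ring

lemma sub_sub_apply (r s : R) (p : R[X]) : sub (r * s) p = sub s (sub r p) := by
  rw [← sub_comp_sub]; rfl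

lemma clear_family {ι : Type*} [Finite ι] (c : ι → S[X]) (hc : ∀ a, (c a).eval 0 = 0) :
    ∃ s ∈ M, ∀ a, ∃ c' : R[X], c'.eval 0 = 0 ∧
      c'.map (algebraMap R S) = sub (algebraMap R S s) (c a) := by
  refine finite_prod M (fun a s => ∃ c' : R[X], c'.eval 0 = 0 ∧
      c'.map (algebraMap R S) = sub (algebraMap R S s) (c a)) (fun a => clear M _ (hc a)) ?_
  rintro a s r hr ⟨c', h1, h2⟩
  refine ⟨sub r c', ?_, ?_⟩
  · have := congrArg (fun φ => φ c') (ev0_comp_sub r)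
    simp only [RingHom.comp_apply, ev0_apply] at this
    rw [this, h1]
  · have := congrArg (fun φ => φ c') (map_comp_sub (algebraMap R S) r)
    simp only [RingHom.comp_apply, coe_mapRingHom] at this
    rw [this, h2, map_mul, sub_sub_apply]

lemma conj_dil (hn : 3 ≤ n) (γ : GL (Fin n) S) (i j : Fin n) (hij : i ≠ j) (f : S[X])
    (hf : f.eval 0 = 0) :
    ∃ s ∈ M, glMap (sub (algebraMap R S s)) (glMap C γ * el i j hij f * (glMap C γ)⁻¹) ∈
      KD n (algebraMap R S) := by
  classical
  obtain ⟨r, hr⟩ := IsLocalization.exist_integer_multiples_of_finite M (fun k => γ k i)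
  choose v hv using hr
  obtain ⟨ri, hri⟩ : ∃ ri : S, ri * algebraMap R S r = 1 := by
    obtain ⟨u, hu⟩ := IsLocalization.map_units S r
    exact ⟨(u⁻¹ : Sˣ), by rw [← hu]; simp⟩
  have hγ : ∀ k, γ k i = ri * algebraMap R S (v k) := by
    intro k
    rw [hv, Algebra.smul_def, ← mul_assoc, hri, one_mul]
  obtain ⟨s, hs, hc⟩ := clear_family M (fun q : Fin n × Fin n =>
    f * C ((γ⁻¹ : GL (Fin n) S) j q.1 * (γ⁻¹ : GL (Fin n) S) i q.2 * ri ^ 2))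
    (fun a => by simp [hf])
  choose c hc0 hcm using hc
  refine ⟨s, hs, ?_⟩
  have hΓ : glMap (sub (algebraMap R S s)) (glMap C γ) = glMap C γ := by
    rw [glMap_comp, sub_comp_C]
  rw [map_mul, map_mul, map_inv, hΓ, glMap_el]
  refine conj_crit _ (glMap C γ) i j hij _ fun k l hkl => ?_
  have hvC : ∀ k, (glMap (C : S →+* S[X]) γ) k i = C (ri * algebraMap R S (v k)) := by
    intro k; rw [← hγ]; rfl
  have hiC : ∀ k l, ((glMap (C : S →+* S[X]) γ)⁻¹ : GL (Fin n) S[X]) k l =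
      C ((γ⁻¹ : GL (Fin n) S) k l) := by
    intro k l; rw [← map_inv]; rfl
  refine ⟨?_, ?_⟩
  · rw [smul_dotProduct, suslin_dot (fun k => (glMap (C : S →+* S[X]) γ) k i), smul_zero]
  obtain ⟨-, x, hx, hxe⟩ := suslin hn (fun k => C (v k)) (c (k, l)) k l hkl
  refine ⟨glMap (mapRingHom (algebraMap R S)) x, ⟨x, ⟨hx, ?_⟩, rfl⟩, ?_⟩
  · change _ ∈ (glMap ev0).ker
    rw [MonoidHom.mem_ker]
    apply Units.ext
    rw [glMap_val, hxe]
    ext a b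
    by_cases hab : a = b
    · simp [vecMulVec_apply, ev0_apply, hc0, Matrix.one_apply, hab]
    · simp [vecMulVec_apply, ev0_apply, hc0, Matrix.one_apply, hab]
  · rw [glMap_val, hxe]
    have hk := hcm (k, l)
    simp only [map_mul] at hk
    have hsc : ∀ z : S, sub (algebraMap R S s) (C z) = C z := fun z => by simp [sub_apply]
    ext1 a b
    simp only [Matrix.map_apply, Matrix.add_apply, map_add, vecMulVec_apply, Pi.smul_apply,
      smul_eq_mul, Pi.sub_apply, map_mul, map_sub, Matrix.one_apply, Pi.single_apply,
      apply_ite (Polynomial.map (algebraMap R S)), map_one, map_zero, coe_mapRingHom,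
      Polynomial.map_add, Polynomial.map_mul, Polynomial.map_sub, Polynomial.map_one,
      Polynomial.map_zero, Polynomial.map_C, hvC, hiC]
    rw [hk]
    simp only [map_pow, hsc]
    congr 1
    split_ifs <;> ring

lemma dil_aux (hn : 3 ≤ n) {δ : GL (Fin n) S[X]} (hδ : δ ∈ elemGL n S[X]) :
    ∃ s ∈ M, glMap (sub (algebraMap R S s)) (δ * (glMap C (glMap ev0 δ))⁻¹) ∈
      KD n (algebraMap R S) := by
  refine elem_induction_right (p := fun δ => ∃ s ∈ M,
    glMap (sub (algebraMap R S s)) (δ * (glMap C (glMap ev0 δ))⁻¹) ∈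
      KD n (algebraMap R S)) ?_ ?_ hδ
  · exact ⟨1, one_mem _, by simp⟩
  · rintro i j hij a x hx ⟨s, hs, h⟩
    obtain ⟨r, hr, h'⟩ := conj_dil M hn (glMap ev0 x) i j hij (a - C (a.eval 0)) (by simp)
    refine ⟨s * r, mul_mem hs hr, ?_⟩
    have e1 : x * el i j hij a * (glMap C (glMap ev0 (x * el i j hij a)))⁻¹ =
      (x * (glMap C (glMap ev0 x))⁻¹) *
        (glMap C (glMap ev0 x) * el i j hij (a - C (a.eval 0)) * (glMap C (glMap ev0 x))⁻¹) := by
      rw [map_mul, map_mul, glMap_el, glMap_el, _root_.mul_inv_rev, el_inv, sub_eq_add_neg, ← el_mul,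
        ev0_apply]
      group
    rw [e1, map_mul]
    refine mul_mem ?_ ?_
    · rw [map_mul (algebraMap R S), ← sub_comp_sub, ← glMap_comp]
      exact KD_sub _ _ h
    · rw [mul_comm s r, map_mul (algebraMap R S), ← sub_comp_sub, ← glMap_comp]
      exact KD_sub _ _ h'

/-- Dilation principle. -/
lemma dilation (hn : 3 ≤ n) (α : GL (Fin n) R[X]) (h0 : glMap ev0 α = 1)
    (h : glMap (mapRingHom (algebraMap R S)) α ∈ elemGL n S[X]) :
    ∃ s ∈ M, glMap (sub s) α ∈ elemGL n R[X] := by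
  obtain ⟨s, hs, β, ⟨hβ, hβ0⟩, hαβ⟩ := dil_aux M hn h
  change _ ∈ (glMap ev0).ker at hβ0
  rw [MonoidHom.mem_ker] at hβ0
  have e0 : glMap ev0 (glMap (mapRingHom (algebraMap R S)) α) = 1 := by
    have : (ev0 : S[X] →+* S).comp (mapRingHom (algebraMap R S)) =
        (algebraMap R S).comp ev0 := by
      apply Polynomial.ringHom_ext
      · intro a; simp [ev0_apply]
      · simp [ev0_apply]
    rw [glMap_comp, this, ← glMap_comp, h0, map_one]
  rw [e0, map_one, inv_one, mul_one, glMap_comp, ← map_comp_sub, ← glMap_comp] at hαβ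
  set α' := glMap (sub s) α with hα'
  have hα'0 : glMap ev0 α' = 1 := by rw [hα', glMap_comp, ev0_comp_sub, h0]
  obtain ⟨r, hr, hr2⟩ := finite_prod (ι := Fin n × Fin n) M
    (fun q r => sub r (α' q.1 q.2) = sub r (β q.1 q.2)) (by
      rintro ⟨i, j⟩
      have hm : (β i j).map (algebraMap R S) = (α' i j).map (algebraMap R S) := by
        have := congrArg (fun z : GL (Fin n) S[X] => z i j) hαβ
        exact this
      have hz : (α' i j - β i j).eval 0 = 0 := by
        have h1 := congrArg (fun z : GL (Fin n) R => z i j) hα'0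
        have h2 := congrArg (fun z : GL (Fin n) R => z i j) hβ0
        have h3 : (α' i j).eval 0 = (β i j).eval 0 := h1.trans h2.symm
        rw [eval_sub, h3, sub_self]
      obtain ⟨d, hd⟩ : X ∣ α' i j - β i j := by
        rw [X_dvd_iff, coeff_zero_eq_eval_zero]; exact hz
      have hdm : d.map (algebraMap R S) = 0 := by
        have : (X * d).map (algebraMap R S) = 0 := by
          rw [← hd, Polynomial.map_sub, hm, sub_self]
        rw [Polynomial.map_mul, map_X] at this
        ext k
        have := congrArg (fun p => p.coeff (k + 1)) this
        simpa using this
      obtain ⟨t, ht, htd⟩ : ∃ t ∈ M, C t * d = 0 := by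
        obtain ⟨t, ht, h2⟩ := finite_prod (ι := Fin (d.natDegree + 1)) M
          (fun k t => t * d.coeff k = 0) (fun k => by
            have : algebraMap R S (d.coeff k) = algebraMap R S 0 := by
              rw [← coeff_map, hdm, map_zero, coeff_zero]
            obtain ⟨c, hc⟩ := (IsLocalization.eq_iff_exists M S).1 this
            exact ⟨c, c.2, by rw [hc, mul_zero]⟩) (fun a s r hr h => by
            rw [mul_right_comm, h, zero_mul])
        refine ⟨t, ht, ?_⟩
        ext k
        rw [coeff_C_mul, coeff_zero]
        by_cases hk : k < d.natDegree + 1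
        · exact h2 ⟨k, hk⟩
        · rw [coeff_eq_zero_of_natDegree_lt (by omega), mul_zero]
      refine ⟨t, ht, ?_⟩
      rw [← sub_eq_zero, ← map_sub]
      change sub t (α' i j - β i j) = 0
      rw [hd]
      have h5 : sub t (X * d) = X * sub t (C t * d) := by
        simp [sub_apply]; ring
      rw [h5, htd, map_zero, mul_zero])
    (by
      intro a s r _ h
      rw [sub_sub_apply, sub_sub_apply, h])
  refine ⟨s * r, mul_mem hs hr, ?_⟩
  have : glMap (sub (s * r)) α = glMap (sub r) β := by
    rw [← sub_comp_sub, ← glMap_comp, ← hα']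
    apply Units.ext
    ext1 i j
    exact hr2 (i, j)
  rw [this]
  exact elem_map _ hβ

end Dilation

section LocalGlobal

open Polynomial

/-- The shift `X ↦ z + c w` from `R[x]` to `R[z][w]`. -/
noncomputable def sh (c : R) : R[X] →+* R[X][X] :=
  eval₂RingHom ((C : R[X] →+* R[X][X]).comp (C : R →+* R[X])) (C X + C (C c) * X)

lemma sh_C (c a : R) : sh c (C a) = C (C a) := by simp [sh]

lemma sh_X (c : R) : sh c X = C X + C (C c) * X := by simp [sh]

lemma sh_zero : sh (0 : R) = C := by
  apply Polynomial.ringHom_ext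
  · intro a; rw [sh_C]
  · rw [sh_X]; simp

lemma sub_comp_sh (c r : R) : (sub (C r)).comp (sh c) = sh (c * r) := by
  apply Polynomial.ringHom_ext
  · intro a; simp [sh_C, sub_apply]
  · simp [sh_X, sub_apply, mul_assoc]

/-- The shift `z ↦ z + d w`, `w ↦ w`. -/
noncomputable def sh2 (d : R) : R[X][X] →+* R[X][X] := eval₂RingHom (sh d) X

lemma sh2_comp_C (d : R) : (sh2 d).comp C = sh d := by
  ext a <;> simp [sh2]

lemma sh2_comp_sh (c d : R) : (sh2 d).comp (sh c) = sh (c + d) := by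
  apply Polynomial.ringHom_ext
  · intro a; simp [sh_C, sh2]
  · simp [sh_X, sh_C, sh2]; ring

lemma ev0_comp_sh (c : R) : (ev0 : R[X][X] →+* R[X]).comp (sh c) = RingHom.id _ := by
  apply Polynomial.ringHom_ext
  · intro a; simp [sh_C, ev0_apply]
  · simp [sh_X, ev0_apply]

lemma mapev0_comp_sh : (mapRingHom (ev0 : R[X] →+* R)).comp (sh 1) = RingHom.id _ := by
  apply Polynomial.ringHom_ext
  · intro a; simp [sh_C, ev0_apply]
  · simp [sh_X, ev0_apply]

lemma map_comp_sh (f : R →+* S) (c : R) :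
    (mapRingHom (mapRingHom f)).comp (sh c) = (sh (f c)).comp (mapRingHom f) := by
  apply Polynomial.ringHom_ext
  · intro a; simp [sh_C]
  · simp [sh_X]

/-- The element `g(z + c w) g(z)⁻¹`. -/
noncomputable def TT (g : GL (Fin n) R[X]) (c : R) : GL (Fin n) R[X][X] :=
  glMap (sh c) g * (glMap C g)⁻¹

/-- Quillen's ideal. -/
noncomputable def QQ (g : GL (Fin n) R[X]) : Ideal R where
  carrier := {c | TT g c ∈ elemGL n R[X][X]}
  zero_mem' := by simp [TT, sh_zero]
  add_mem' := by
    intro c d hc hd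
    have : TT g (c + d) = glMap (sh2 d) (TT g c) * TT g d := by
      rw [TT, TT, TT, map_mul, map_inv, glMap_comp, glMap_comp, sh2_comp_C, sh2_comp_sh]
      group
    change _ ∈ elemGL n R[X][X]
    rw [this]
    exact mul_mem (elem_map _ hc) hd
  smul_mem' := by
    intro r c hc
    have : TT g (r * c) = glMap (sub (C r)) (TT g c) := by
      rw [TT, TT, map_mul, map_inv, glMap_comp, glMap_comp, sub_comp_C, sub_comp_sh, mul_comm r c]
    change TT g (r * c) ∈ elemGL n R[X][X]
    rw [this]
    exact elem_map _ hc

/-- Local-global principle. -/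
lemma local_global (hn : 3 ≤ n) (g : GL (Fin n) R[X]) (h0 : glMap ev0 g = 1)
    (h : ∀ (m : Ideal R) [m.IsMaximal],
      glMap (mapRingHom (algebraMap R (Localization.AtPrime m))) g ∈
        elemGL n (Localization.AtPrime m)[X]) :
    g ∈ elemGL n R[X] := by
  have h1 : QQ g = ⊤ := by
    by_contra hne
    obtain ⟨m, hm, hle⟩ := Ideal.exists_le_maximal _ hne
    letI : Algebra R[X] (Localization.AtPrime m)[X] := Polynomial.algebra R _
    haveI : IsLocalization (m.primeCompl.map (C : R →+* R[X])) (Localization.AtPrime m)[X] :=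
      Polynomial.isLocalization _ _
    have key : glMap (mapRingHom (algebraMap R[X] (Localization.AtPrime m)[X])) (TT g 1) ∈
        elemGL n (Localization.AtPrime m)[X][X] := by
      have e : algebraMap R[X] (Localization.AtPrime m)[X] =
        mapRingHom (algebraMap R (Localization.AtPrime m)) := rfl
      have e2 : (mapRingHom (mapRingHom (algebraMap R (Localization.AtPrime m)))).comp C =
        C.comp (mapRingHom (algebraMap R (Localization.AtPrime m))) := by
        refine RingHom.ext fun x => ?_; simp
      rw [e, TT, map_mul, map_inv, glMap_comp, glMap_comp, map_comp_sh, e2, ← glMap_comp,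
        ← glMap_comp]
      exact mul_mem (elem_map _ (h m)) (inv_mem (elem_map _ (h m)))
    obtain ⟨s, ⟨s0, hs0, rfl⟩, hs⟩ := dilation (m.primeCompl.map (C : R →+* R[X])) hn (TT g 1)
      (by rw [TT, map_mul, map_inv, glMap_comp, glMap_comp, ev0_comp_sh, ev0_comp_C,
            mul_inv_cancel]) key
    apply hs0
    apply hle
    change TT g s0 ∈ elemGL n R[X][X]
    have : TT g s0 = glMap (sub (C s0)) (TT g 1) := by
      rw [TT, TT, map_mul, map_inv, glMap_comp, glMap_comp, sub_comp_C, sub_comp_sh, one_mul]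
    rw [this]
    exact hs
  have h2 : TT g 1 ∈ elemGL n R[X][X] := by
    have : (1 : R) ∈ QQ g := by rw [h1]; trivial
    exact this
  have h3 := elem_map (mapRingHom (ev0 : R[X] →+* R)) h2
  have e2 : (mapRingHom (ev0 : R[X] →+* R)).comp C = C.comp ev0 := by
    refine RingHom.ext fun x => ?_; simp
  rw [TT, map_mul, map_inv, glMap_comp, glMap_comp, mapev0_comp_sh, e2, ← glMap_comp C, h0,
    map_one, inv_one, mul_one, glMap_id] at h3
  exact h3

end LocalGlobal

section Laurent

open PowerSeries (X)

/-- The ring of Laurent series, as a localization. -/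
abbrev LL (R : Type*) [CommRing R] := Localization.Away (PowerSeries.X : PowerSeries R)

/-- The embedding of power series into Laurent series. -/
noncomputable def ios : PowerSeries R →+* LL R := algebraMap _ _

lemma ios_inj : Function.Injective (ios : PowerSeries R →+* LL R) := by
  apply IsLocalization.injective (M := Submonoid.powers (PowerSeries.X : PowerSeries R))
  intro x hx
  obtain ⟨k, rfl⟩ := hx
  refine pow_mem ?_ k
  rw [mem_nonZeroDivisors_iff_right]
  intro p hp
  ext m
  have := congrArg (PowerSeries.coeff (m + 1)) hp
  simpa using this

lemma ios_unit : IsUnit (ios (PowerSeries.X : PowerSeries R)) :=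
  IsLocalization.Away.algebraMap_isUnit _

/-- The Laurent parameter. -/
noncomputable def yy : (LL R)ˣ := (ios_unit (R := R)).unit

lemma yy_val : ((yy : (LL R)ˣ) : LL R) = ios PowerSeries.X := rfl

/-- The inverse of the Laurent parameter. -/
noncomputable def tt : (LL R)ˣ := yy⁻¹

lemma tt_mul_ios : ((tt : (LL R)ˣ) : LL R) * ios PowerSeries.X = 1 := by
  rw [← yy_val, tt]; exact Units.inv_mul _

lemma LL_surj (b : LL R) : ∃ (k : ℕ) (p : PowerSeries R), b = (tt : (LL R)ˣ) ^ k * ios p := by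
  obtain ⟨k, p, hp⟩ := IsLocalization.Away.surj (PowerSeries.X : PowerSeries R) b
  refine ⟨k, p, ?_⟩
  change b * ios _ ^ k = ios p at hp
  rw [← hp, mul_comm b, ← mul_assoc, ← mul_pow, tt_mul_ios, one_pow, one_mul]

/-- The embedding of polynomials in `t`. -/
noncomputable def ph : Polynomial R →+* LL R :=
  Polynomial.eval₂RingHom (ios.comp PowerSeries.C) (tt : (LL R)ˣ)

lemma ph_C (a : R) : ph (Polynomial.C a) = ios (PowerSeries.C a) := by simp [ph]

lemma ph_X : ph (Polynomial.X : Polynomial R) = (tt : (LL R)ˣ) := by simp [ph]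

lemma ph_rev (f : Polynomial R) :
    ph f = (tt : (LL R)ˣ) ^ f.natDegree * ios (f.reverse : PowerSeries R) := by
  letI : Invertible ((tt : (LL R)ˣ) : LL R) := Units.invertible _
  have := Polynomial.eval₂_reverse_mul_pow (ios.comp (PowerSeries.C (R := R)))
    ((tt : (LL R)ˣ) : LL R) f
  rw [ph, Polynomial.coe_eval₂RingHom, ← this, mul_comm]
  congr 1
  have e : (⅟((tt : (LL R)ˣ) : LL R)) = ios PowerSeries.X := by
    rw [invOf_units, tt, inv_inv, yy_val]
  rw [e]
  have h2 : Polynomial.eval₂RingHom (ios.comp (PowerSeries.C (R := R))) (ios PowerSeries.X) =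
      ios.comp Polynomial.coeToPowerSeries.ringHom := by
    apply Polynomial.ringHom_ext
    · intro a; simp
    · simp
  exact congrArg (fun q => q f.reverse) h2

lemma const_of_ph (f : Polynomial R) (p : PowerSeries R) (h : ph f = ios p) : f.natDegree = 0 := by
  by_contra hN
  rw [ph_rev] at h
  have h1 : ios (f.reverse : PowerSeries R) = ios (PowerSeries.X ^ f.natDegree * p) := by
    rw [map_mul, ← h, map_pow, ← mul_assoc, ← mul_pow, mul_comm (ios _), tt_mul_ios, one_pow,
      one_mul]
  have h2 := congrArg (PowerSeries.coeff 0) (ios_inj h1)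
  rw [Polynomial.coeff_coe, Polynomial.coeff_zero_reverse, PowerSeries.coeff_zero_eq_constantCoeff,
    map_mul, map_pow, PowerSeries.constantCoeff_X, zero_pow hN, zero_mul,
    Polynomial.leadingCoeff_eq_zero] at h2
  rw [h2] at hN
  simp at hN

lemma zero_of_ph (f : Polynomial R) (p : PowerSeries R) (k : ℕ) (hk : k ≠ 0)
    (h : ph f = ios (PowerSeries.X ^ k * p)) : f = 0 := by
  have h1 := const_of_ph _ _ h
  rw [Polynomial.eq_C_of_natDegree_eq_zero h1, ph_C] at h
  have h2 := congrArg (PowerSeries.coeff 0) (ios_inj h)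
  rw [PowerSeries.coeff_zero_eq_constantCoeff, PowerSeries.constantCoeff_C, map_mul, map_pow,
    PowerSeries.constantCoeff_X, zero_pow hk, zero_mul] at h2
  rw [Polynomial.eq_C_of_natDegree_eq_zero h1, h2, map_zero]

lemma ph_monic (f : Polynomial R) (hf : f.Monic) : IsUnit (ph f) := by
  rw [ph_rev]
  refine IsUnit.mul ((Units.isUnit _).pow _) (IsUnit.map _ ?_)
  rw [PowerSeries.isUnit_iff_constantCoeff, ← PowerSeries.coeff_zero_eq_constantCoeff_apply,
    Polynomial.coeff_coe, Polynomial.coeff_zero_reverse, hf.leadingCoeff]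
  exact isUnit_one

/-- Functoriality of Laurent series. -/
noncomputable def LLmap (f : R →+* S) : LL R →+* LL S :=
  IsLocalization.Away.lift (PowerSeries.X : PowerSeries R) (g := ios.comp (PowerSeries.map f))
    (by simpa using ios_unit)

lemma LLmap_ios (f : R →+* S) (p : PowerSeries R) : LLmap f (ios p) = ios (PowerSeries.map f p) := by
  exact IsLocalization.Away.lift_eq (PowerSeries.X : PowerSeries R) _ p

lemma LLmap_tt (f : R →+* S) : LLmap f (tt : (LL R)ˣ) = (tt : (LL S)ˣ) := by
  have h1 : LLmap f (tt : (LL R)ˣ) * ios PowerSeries.X = 1 := by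
    have := congrArg (LLmap f) (tt_mul_ios (R := R))
    rwa [map_mul, LLmap_ios, PowerSeries.map_X, map_one] at this
  have h2 := tt_mul_ios (R := S)
  exact ios_unit.mul_right_cancel (h1.trans h2.symm)

lemma LLmap_ph (f : R →+* S) : (LLmap f).comp ph = ph.comp (Polynomial.mapRingHom f) := by
  apply Polynomial.ringHom_ext
  · intro a; simp [ph_C, LLmap_ios]
  · simp [ph_X, LLmap_tt]

end Laurent

section LocalA

variable {A : Type*} [CommRing A] [IsLocalRing A]

/-- Coefficientwise reduction. -/
noncomputable def rh : PowerSeries A →+* PowerSeries (IsLocalRing.ResidueField A) :=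
  PowerSeries.map (IsLocalRing.residue A)

variable (n A) in
/-- The congruence subgroup over power series, inside Laurent series. -/
noncomputable def HH : Subgroup (GL (Fin n) (LL A)) :=
  (glMap (rh (A := A))).ker.map (glMap ios)

variable (n R) in
/-- The image of the elementary group over polynomials. -/
noncomputable def EP : Subgroup (GL (Fin n) (LL R)) := (elemGL n (Polynomial R)).map (glMap ph)

lemma lift_gl (M : GL (Fin n) (LL R)) (N : Matrix (Fin n) (Fin n) (PowerSeries R))
    (hMN : ∀ k l, M k l = ios (N k l)) (u : PowerSeries R) (hu : IsUnit u)
    (hdet : (M : Matrix (Fin n) (Fin n) (LL R)).det = ios u) :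
    ∃ N' : GL (Fin n) (PowerSeries R), N'.val = N ∧ glMap ios N' = M := by
  have h1 : (M : Matrix (Fin n) (Fin n) (LL R)) = N.map ios := by
    ext k l; exact hMN k l
  have h2 : IsUnit N := by
    rw [Matrix.isUnit_iff_isUnit_det]
    have : N.det = u := by
      apply ios_inj
      rw [← hdet, h1]
      exact RingHom.map_det ios N
    rw [this]; exact hu
  obtain ⟨N', rfl⟩ := h2
  exact ⟨N', rfl, Units.ext h1.symm⟩

lemma mem_HH (M : GL (Fin n) (LL A)) (N : Matrix (Fin n) (Fin n) (PowerSeries A))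
    (hMN : ∀ k l, M k l = ios (N k l)) (u : PowerSeries A) (hu : IsUnit u)
    (hdet : (M : Matrix (Fin n) (Fin n) (LL A)).det = ios u)
    (hN : ∀ k l, rh (N k l) = (1 : Matrix (Fin n) (Fin n) _) k l) : M ∈ HH n A := by
  obtain ⟨N', h1, h2⟩ := lift_gl M N hMN u hu hdet
  refine ⟨N', ?_, h2⟩
  rw [SetLike.mem_coe, MonoidHom.mem_ker]
  apply Units.ext
  ext1 k l
  rw [glMap_val, h1]
  exact hN k l

lemma conj_entry (i j : Fin n) (hij : i ≠ j) (a b : R) (Q : Matrix (Fin n) (Fin n) R)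
    (k l : Fin n) : (transvection i j a * Q * transvection i j b) k l =
      (Q k l + if k = i then a * Q j l else 0) +
      if l = j then b * (Q k i + if k = i then a * Q j i else 0) else 0 := by
  have e : ∀ k l, (transvection i j a * Q) k l = Q k l + if k = i then a * Q j l else 0 := by
    intro k l
    split_ifs with h
    · rw [h, transvection_mul_apply_same]
    · rw [transvection_mul_apply_of_ne _ _ _ _ h, add_zero]
  split_ifs with h1 h2 h2
  · rw [h2, mul_transvection_apply_same, e, e, if_pos h1, if_pos h1]
  · rw [mul_transvection_apply_of_ne _ _ _ _ h2, e, if_pos h1, add_zero]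
  · rw [h2, mul_transvection_apply_same, e, e, if_neg h1, if_neg h1]
  · rw [mul_transvection_apply_of_ne _ _ _ _ h2, e, if_neg h1, add_zero, add_zero]

lemma rh_X : rh (PowerSeries.X : PowerSeries A) = PowerSeries.X := PowerSeries.map_X _

lemma rh_C (a : A) : rh (PowerSeries.C a) = PowerSeries.C (IsLocalRing.residue A a) :=
  PowerSeries.map_C _ _

lemma cc_rh (p : PowerSeries A) : PowerSeries.constantCoeff (rh p) =
    IsLocalRing.residue A (PowerSeries.constantCoeff p) := by
  have := PowerSeries.coeff_map (IsLocalRing.residue A) 0 p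
  rwa [PowerSeries.coeff_zero_eq_constantCoeff_apply,
    PowerSeries.coeff_zero_eq_constantCoeff_apply] at this

lemma step_hat (i j : Fin n) (hij : i ≠ j) (a : A) (P : GL (Fin n) (PowerSeries A))
    (hP : glMap rh P = 1) (hP0 : glMap PowerSeries.constantCoeff P = 1) :
    ∃ a' : A, el i j hij (ph (Polynomial.C a * Polynomial.X)) * glMap ios P *
      el i j hij (ph (Polynomial.C (-a') * Polynomial.X)) ∈ HH n A := by
  have hD : ∀ k l, ∃ d, P k l = (1 : Matrix (Fin n) (Fin n) (PowerSeries A)) k l +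
      PowerSeries.X * d ∧ rh d = 0 := by
    intro k l
    have h0 : PowerSeries.constantCoeff (P k l) = (1 : Matrix (Fin n) (Fin n) A) k l :=
      congrArg (fun z : GL (Fin n) A => z k l) hP0
    have h1 : rh (P k l) = (1 : Matrix (Fin n) (Fin n) _) k l :=
      congrArg (fun z : GL (Fin n) _ => z k l) hP
    obtain ⟨d, hd⟩ : PowerSeries.X ∣ P k l - (1 : Matrix (Fin n) (Fin n) (PowerSeries A)) k l := by
      rw [PowerSeries.X_dvd_iff, map_sub, h0]
      simp [Matrix.one_apply, apply_ite (PowerSeries.constantCoeff (R := A))]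
    refine ⟨d, by rw [← hd]; ring, ?_⟩
    apply PowerSeries.X_mul_cancel
    rw [mul_zero, ← rh_X, ← map_mul, ← hd, map_sub, h1]
    simp [Matrix.one_apply, apply_ite (rh (A := A))]
  choose D hPD hD0 using hD
  obtain ⟨b, d, hbd, hb0, hd0⟩ : ∃ b d, D j i = PowerSeries.C b + PowerSeries.X * d ∧
      IsLocalRing.residue A b = 0 ∧ rh d = 0 := by
    obtain ⟨d, hd⟩ : PowerSeries.X ∣ D j i - PowerSeries.C (PowerSeries.constantCoeff (D j i)) := by
      rw [PowerSeries.X_dvd_iff, map_sub, PowerSeries.constantCoeff_C, sub_self]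
    have hb : IsLocalRing.residue A (PowerSeries.constantCoeff (D j i)) = 0 := by
      have := congrArg PowerSeries.constantCoeff (hD0 j i)
      rw [map_zero, cc_rh] at this
      exact this
    refine ⟨PowerSeries.constantCoeff (D j i), d, by rw [← hd]; ring, hb, ?_⟩
    apply PowerSeries.X_mul_cancel
    rw [mul_zero, ← rh_X, ← map_mul, ← hd, map_sub, hD0, rh_C, hb]
    simp
  have hu : IsUnit (1 + a * b) := by
    by_contra hcon
    have h1 : IsLocalRing.residue A (1 + a * b) = 0 := by
      rw [IsLocalRing.residue_eq_zero_iff]; exact hcon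
    rw [map_add, map_mul, hb0, mul_zero, add_zero, map_one] at h1
    exact one_ne_zero h1
  obtain ⟨w, hw⟩ := hu.exists_right_inv
  obtain ⟨a', ha'⟩ : ∃ a', a = a' * (1 + a * b) := ⟨a * w, by linear_combination -a * hw⟩
  refine ⟨a', ?_⟩
  let N : Matrix (Fin n) (Fin n) (PowerSeries A) := fun k l =>
    (1 : Matrix (Fin n) (Fin n) (PowerSeries A)) k l + PowerSeries.X * D k l +
    (if k = i then PowerSeries.C a * D j l else 0) - (if l = j then PowerSeries.C a' * D k i +
      (if k = i then PowerSeries.C (a * a') * d else 0) else 0)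
  refine mem_HH _ N ?_ (P : Matrix (Fin n) (Fin n) (PowerSeries A)).det ?_ ?_ ?_
  · intro k l
    have ht := tt_mul_ios (R := A)
    have hPios : ∀ k l, (glMap ios P : GL (Fin n) (LL A)) k l =
      (if k = l then 1 else 0) + ios PowerSeries.X * ios (D k l) := by
      intro k l
      rw [glMap_val, Matrix.map_apply, hPD, map_add, map_mul, Matrix.one_apply,
        apply_ite (ios (R := A)), map_one, map_zero]
    have haa : ios (PowerSeries.C a) = ios (PowerSeries.C a') *
        (1 + ios (PowerSeries.C a) * ios (PowerSeries.C b)) := by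
      rw [← map_mul, ← map_mul PowerSeries.C, ← map_one ios, ← map_one PowerSeries.C, ← map_add,
        ← map_add, ← map_mul, ← map_mul, ← ha']
    have hDios : ios (D j i) = ios (PowerSeries.C b) + ios PowerSeries.X * ios d := by
      rw [hbd, map_add, map_mul]
    rw [Units.val_mul, Units.val_mul, el_val, el_val, conj_entry i j hij]
    simp only [hPios, N, map_mul, ph_C, ph_X, map_neg, map_add, map_sub, Matrix.one_apply,
      apply_ite (ios (R := A)), map_one, map_zero]
    generalize ios (PowerSeries.C a) = α at *
    generalize ios (PowerSeries.C a') = α' at *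
    generalize ios (PowerSeries.C b) = β at *
    generalize ((tt : (LL A)ˣ) : LL A) = t at *
    generalize ios (PowerSeries.X : PowerSeries A) = y at *
    rw [if_neg hij.symm]
    by_cases hk : k = i
    · by_cases hl : l = j
      · subst hk hl
        simp only [if_true, hDios, if_neg hij, if_neg hij.symm]
        linear_combination t * haa + (α * ios (D l l) - α' * ios (D k k) - α * α' * t * β
          - α * α' * ios d * (t * y + 1)) * ht
      · have hl' : j ≠ l := fun h => hl h.symm
        simp only [if_neg hl, if_neg hl', if_pos hk]
        linear_combination α * ios (D j l) * ht
    · by_cases hl : l = j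
      · simp only [if_pos hl, if_neg hk]
        linear_combination -α' * ios (D k i) * ht
      · simp only [if_neg hl, if_neg hk]
        ring
  · rw [← Matrix.isUnit_iff_isUnit_det]
    exact P.isUnit
  · rw [Units.val_mul, Units.val_mul, Matrix.det_mul, Matrix.det_mul, el_val, el_val,
      det_transvection_of_ne _ _ hij, det_transvection_of_ne _ _ hij, one_mul, mul_one]
    exact (RingHom.map_det (ios (R := A)) (P : Matrix (Fin n) (Fin n) (PowerSeries A))).symm
  · intro k l
    simp only [N, map_add, map_sub, map_mul, hD0, apply_ite (rh (A := A)), hd0, mul_zero, map_zero,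
      add_zero, sub_zero, ite_self, Matrix.one_apply, map_one]

/-- The product set. -/
def prodSet {G : Type*} [Group G] (H E : Subgroup G) : Set G := {z | ∃ h ∈ H, ∃ e ∈ E, z = h * e}

lemma const_ios (Q : GL (Fin n) R) : glMap ios (glMap PowerSeries.C Q) =
    glMap ph (glMap Polynomial.C Q) := by
  rw [glMap_comp, glMap_comp]
  congr 1
  have : (ios (R := R)).comp PowerSeries.C = ph.comp Polynomial.C := by
    ext a; simp [ph_C]
  rw [this]

lemma step_gen (hn : 3 ≤ n) (i j : Fin n) (hij : i ≠ j) (a : A) (p : GL (Fin n) (LL A))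
    (hp : p ∈ HH n A) :
    el i j hij (ph (Polynomial.C a * Polynomial.X)) * p ∈ prodSet (HH n A) (EP n A) := by
  obtain ⟨P, hP, rfl⟩ := hp
  rw [SetLike.mem_coe, MonoidHom.mem_ker] at hP
  set Q := glMap PowerSeries.constantCoeff P with hQ
  have hq : glMap rh (glMap PowerSeries.C Q) = 1 := by
    have : ((rh (A := A)).comp PowerSeries.C).comp PowerSeries.constantCoeff =
      (PowerSeries.C.comp PowerSeries.constantCoeff).comp rh := by
      refine RingHom.ext fun x => ?_
      rw [RingHom.comp_apply, RingHom.comp_apply, RingHom.comp_apply, RingHom.comp_apply, rh_C,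
        cc_rh]
    rw [hQ, glMap_comp, glMap_comp, this, ← glMap_comp, hP, map_one]
  obtain ⟨a', h'⟩ := step_hat i j hij a (P * (glMap PowerSeries.C Q)⁻¹)
    (by rw [map_mul, map_inv, hP, hq, inv_one, mul_one])
    (by
      have : (PowerSeries.constantCoeff (R := A)).comp PowerSeries.C = RingHom.id A := by
        ext a; simp
      rw [map_mul, map_inv, glMap_comp, this, glMap_id, ← hQ, mul_inv_cancel])
  have hq' : glMap ios (glMap PowerSeries.C Q) ∈ HH n A :=
    Subgroup.mem_map_of_mem _ (MonoidHom.mem_ker.2 hq)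
  clear_value Q
  refine ⟨_, mul_mem h' hq',
    (glMap ph (glMap Polynomial.C Q))⁻¹ *
      el i j hij (ph (Polynomial.C a' * Polynomial.X)) * (glMap ph (glMap Polynomial.C Q)), ?_, ?_⟩
  · refine ⟨(glMap Polynomial.C Q)⁻¹ * el i j hij (Polynomial.C a' * Polynomial.X) *
      ((glMap Polynomial.C Q)⁻¹)⁻¹, elem_normal hn _ _ (el_mem _ _ _ _), ?_⟩
    rw [map_mul, map_mul, inv_inv, map_inv, glMap_el]
  · have : el i j hij (ph (Polynomial.C (-a') * Polynomial.X)) =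
      (el i j hij (ph (Polynomial.C a' * Polynomial.X)))⁻¹ := by
      rw [el_inv, ← map_neg]; simp
    rw [this, const_ios, map_mul (glMap (ios (R := A))), map_inv, const_ios]
    generalize glMap ios P = a1
    generalize glMap ph (glMap Polynomial.C Q) = a2
    generalize el i j hij (ph (Polynomial.C a * Polynomial.X)) = a3
    generalize el i j hij (ph (Polynomial.C a' * Polynomial.X)) = a4
    group

lemma step_const (i j : Fin n) (hij : i ≠ j) (a : A) (p : GL (Fin n) (LL A))
    (hp : p ∈ HH n A) :
    el i j hij (ph (Polynomial.C a)) * p ∈ prodSet (HH n A) (EP n A) := by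
  obtain ⟨P, hP, rfl⟩ := hp
  rw [SetLike.mem_coe, MonoidHom.mem_ker] at hP
  refine ⟨glMap ios (el i j hij (PowerSeries.C a) * P * (el i j hij (PowerSeries.C a))⁻¹),
    ⟨_, ?_, rfl⟩, el i j hij (ph (Polynomial.C a)), ⟨_, el_mem _ _ hij (Polynomial.C a), ?_⟩, ?_⟩
  · rw [SetLike.mem_coe, MonoidHom.mem_ker, map_mul, map_mul, hP, map_inv]; group
  · rw [glMap_el]
  · rw [map_mul, map_mul, map_inv, glMap_el, ph_C]; group

lemma el_comm (i j k : Fin n) (hij : i ≠ j) (hjk : j ≠ k) (hik : i ≠ k) (a b : R) :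
    el i k hik (a * b) = el i j hij a * el j k hjk b * (el i j hij a)⁻¹ * (el j k hjk b)⁻¹ := by
  rw [eq_mul_inv_iff_mul_eq, eq_mul_inv_iff_mul_eq]
  apply Units.ext
  simp only [Units.val_mul, el_val, transvection, add_mul, mul_add, one_mul, mul_one,
    Matrix.single_mul_single_same, Matrix.single_mul_single_of_ne _ _ _ _ hik.symm,
    Matrix.single_mul_single_of_ne _ _ _ _ hij.symm, zero_mul,
    Matrix.single_mul_single_of_ne _ _ _ _ hjk.symm]
  abel

lemma elem_gen (hn : 3 ≤ n) : elemGL n (Polynomial R) ≤ Subgroup.closure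
    {x | ∃ (i j : Fin n) (hij : i ≠ j) (a : R), x = el i j hij (Polynomial.C a) ∨
      x = el i j hij (Polynomial.C a * Polynomial.X)} := by
  set K := Subgroup.closure
    {x | ∃ (i j : Fin n) (hij : i ≠ j) (a : R), x = el i j hij (Polynomial.C a) ∨
      x = el i j hij (Polynomial.C a * Polynomial.X)} with hK
  have h1 : ∀ (r : ℕ) (i j : Fin n) (hij : i ≠ j) (a : R),
      el i j hij (Polynomial.C a * Polynomial.X ^ r) ∈ K := by
    intro r
    induction r with
    | zero =>
      intro i j hij a
      rw [pow_zero, mul_one]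
      exact Subgroup.subset_closure ⟨i, j, hij, a, Or.inl rfl⟩
    | succ r ih =>
      intro i k hik a
      obtain ⟨j, hji, hjk⟩ := exists_third hn i k
      have hX : el j k hjk (Polynomial.X : Polynomial R) ∈ K :=
        Subgroup.subset_closure ⟨j, k, hjk, 1, Or.inr (by simp)⟩
      rw [pow_succ, ← mul_assoc, el_comm i j k hji.symm hjk hik]
      exact mul_mem (mul_mem (mul_mem (ih _ _ _ _) hX) (inv_mem (ih _ _ _ _))) (inv_mem hX)
  have h2 : ∀ (i j : Fin n) (hij : i ≠ j) (f : Polynomial R), el i j hij f ∈ K := by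
    intro i j hij f
    induction f using Polynomial.induction_on' with
    | add p q hp hq => rw [← el_mul]; exact mul_mem hp hq
    | monomial r a => rw [← Polynomial.C_mul_X_pow_eq_monomial]; exact h1 _ _ _ _ _
  intro x hx
  refine elem_induction_left (p := fun x => x ∈ K) (one_mem _) ?_ hx
  intro i j hij a x _ hx
  exact mul_mem (h2 _ _ _ _) hx

lemma swap (hn : 3 ≤ n) (e : GL (Fin n) (LL A)) (he : e ∈ EP n A) :
    ∀ p ∈ HH n A, e * p ∈ prodSet (HH n A) (EP n A) := by
  obtain ⟨x, hx, rfl⟩ := he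
  have hx' := elem_gen hn hx
  have key : ∀ (i j : Fin n) (hij : i ≠ j) (a : A) (x : GL (Fin n) (Polynomial A)),
      (x = el i j hij (Polynomial.C a) ∨ x = el i j hij (Polynomial.C a * Polynomial.X)) →
      ∀ y : GL (Fin n) (LL A), (∀ p ∈ HH n A, y * p ∈ prodSet (HH n A) (EP n A)) →
      ∀ p ∈ HH n A, (glMap ph x * y) * p ∈ prodSet (HH n A) (EP n A) := by
    intro i j hij a x hx y hy p hp
    obtain ⟨h, hh, e, he, hpe⟩ := hy p hp
    have : glMap ph x * h ∈ prodSet (HH n A) (EP n A) := by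
      rcases hx with rfl | rfl
      · rw [glMap_el]; exact step_const _ _ _ _ _ hh
      · rw [glMap_el]; exact step_gen hn _ _ _ _ _ hh
    obtain ⟨h', hh', e', he', hpe'⟩ := this
    refine ⟨h', hh', e' * e, mul_mem he' he, ?_⟩
    rw [mul_assoc, hpe, ← mul_assoc, hpe', mul_assoc]
  refine Subgroup.closure_induction_left
    (p := fun x _ => ∀ p ∈ HH n A, glMap ph x * p ∈ prodSet (HH n A) (EP n A)) ?_ ?_ ?_ hx'
  · intro p hp
    exact ⟨p, hp, 1, one_mem _, by simp⟩
  · rintro x ⟨i, j, hij, a, hx⟩ y _ hy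
    rw [map_mul]
    exact key i j hij a x hx _ hy
  · rintro x ⟨i, j, hij, a, hx⟩ y _ hy
    rw [map_mul]
    refine key i j hij (-a) x⁻¹ ?_ _ hy
    rcases hx with rfl | rfl
    · left; rw [el_inv, map_neg]
    · right; rw [el_inv, map_neg, neg_mul]

/-- The product of the congruence subgroup and the elementary group is a subgroup. -/
noncomputable def YY (A : Type*) [CommRing A] [IsLocalRing A] (hn : 3 ≤ n) :
    Subgroup (GL (Fin n) (LL A)) where
  carrier := prodSet (HH n A) (EP n A)
  one_mem' := ⟨1, one_mem _, 1, one_mem _, by simp⟩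
  mul_mem' := by
    rintro _ _ ⟨h, hh, e, he, rfl⟩ ⟨h', hh', e', he', rfl⟩
    obtain ⟨h'', hh'', e'', he'', eq⟩ := swap hn e he h' hh'
    refine ⟨h * h'', mul_mem hh hh'', e'' * e', mul_mem he'' he', ?_⟩
    calc h * e * (h' * e') = h * (e * h') * e' := by group
      _ = _ := by rw [eq]; group
  inv_mem' := by
    rintro _ ⟨h, hh, e, he, rfl⟩
    rw [_root_.mul_inv_rev]
    exact swap hn _ (inv_mem he) _ (inv_mem hh)

end LocalA

section LocalB

/-- Invertible diagonal matrices. -/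
def dg (u : Fin n → Rˣ) : GL (Fin n) R where
  val := Matrix.diagonal fun i => (u i : R)
  inv := Matrix.diagonal fun i => ((u i)⁻¹ : Rˣ)
  val_inv := by rw [Matrix.diagonal_mul_diagonal]; simp
  inv_val := by rw [Matrix.diagonal_mul_diagonal]; simp

/-- The diagonal matrix of powers of `t`. -/
noncomputable def td (d : Fin n → ℤ) : GL (Fin n) (LL R) := dg fun i => tt ^ d i

lemma td_val (d : Fin n → ℤ) : (td d : GL (Fin n) (LL R)).val =
    Matrix.diagonal fun i => ((tt ^ d i : (LL R)ˣ) : LL R) := rfl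

lemma td_add (d e : Fin n → ℤ) : (td (d + e) : GL (Fin n) (LL R)) = td d * td e := by
  apply Units.ext
  rw [Units.val_mul, td_val, td_val, td_val, Matrix.diagonal_mul_diagonal]
  congr 1
  ext i
  rw [Pi.add_apply, _root_.zpow_add, Units.val_mul]

lemma td_zero : (td 0 : GL (Fin n) (LL R)) = 1 := by
  apply Units.ext
  rw [td_val]
  simp

lemma td_neg (d : Fin n → ℤ) : (td (-d) : GL (Fin n) (LL R)) = (td d)⁻¹ := by
  rw [eq_inv_iff_mul_eq_one, ← td_add, neg_add_cancel, td_zero]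

lemma td_mul_apply (d : Fin n → ℤ) (M : GL (Fin n) (LL R)) (k l : Fin n) :
    (td d * M : GL (Fin n) (LL R)) k l = ((tt ^ d k : (LL R)ˣ) : LL R) * M k l := by
  rw [Units.val_mul, td_val, Matrix.diagonal_mul]

lemma mul_td_apply (d : Fin n → ℤ) (M : GL (Fin n) (LL R)) (k l : Fin n) :
    (M * td d : GL (Fin n) (LL R)) k l = M k l * ((tt ^ d l : (LL R)ˣ) : LL R) := by
  rw [Units.val_mul, td_val, Matrix.mul_diagonal]

lemma tt_zpow_nat (m : ℕ) : ((tt ^ (m : ℤ) : (LL R)ˣ) : LL R) = ph (Polynomial.X ^ m) := by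
  rw [zpow_natCast, Units.val_pow_eq_pow_val, map_pow, ph_X]

lemma tt_zpow_neg (m : ℕ) : ((tt ^ (-(m : ℤ)) : (LL R)ˣ) : LL R) = ios (PowerSeries.X ^ m) := by
  rw [_root_.zpow_neg, zpow_natCast, ← inv_pow, tt, inv_inv, Units.val_pow_eq_pow_val, map_pow, yy_val]

lemma prod_zpow_sum {G ι : Type*} [CommGroup G] (s : Finset ι) (g : G) (d : ι → ℤ) :
    ∏ i ∈ s, g ^ d i = g ^ ∑ i ∈ s, d i := by
  classical
  induction s using Finset.induction_on with
  | empty => simp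
  | insert a s ha ih => rw [Finset.prod_insert ha, Finset.sum_insert ha, ih, _root_.zpow_add]

lemma det_conj_td (d e : Fin n → ℤ) (h : ∑ i, d i + ∑ i, e i = 0) (c : GL (Fin n) (PowerSeries R)) :
    (td d * glMap ios c * td e : GL (Fin n) (LL R)).val.det = ios c.val.det := by
  rw [Units.val_mul, Units.val_mul, Matrix.det_mul, Matrix.det_mul, td_val, td_val,
    Matrix.det_diagonal, Matrix.det_diagonal, mul_right_comm, ← Units.coe_prod, ← Units.coe_prod,
    ← Units.val_mul, prod_zpow_sum, prod_zpow_sum, ← _root_.zpow_add, h,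
    zpow_zero, Units.val_one, one_mul]
  exact (RingHom.map_det (ios (R := R)) (c : Matrix (Fin n) (Fin n) (PowerSeries R))).symm

variable {A : Type*} [CommRing A] [IsLocalRing A]

variable (A) in
/-- The set of products. -/
def ZZ (hn : 3 ≤ n) : Set (GL (Fin n) (LL A)) :=
  {z | ∃ (c : GL (Fin n) (PowerSeries A)) (d : Fin n → ℤ), ∃ w ∈ YY A hn,
    z = glMap ios c * td d * w}

lemma exists_unit_entry (c : GL (Fin n) A) (i : Fin n) : ∃ j, IsUnit (c i j) := by
  by_contra! hcon
  have h1 : (1 : A) ∈ IsLocalRing.maximalIdeal A := by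
    have : ((c * c⁻¹ : GL (Fin n) A) : Matrix (Fin n) (Fin n) A) i i = 1 := by
      rw [mul_inv_cancel, Units.val_one, Matrix.one_apply_eq]
    rw [← this, Units.val_mul, Matrix.mul_apply]
    exact sum_mem fun j _ => Ideal.mul_mem_right _ _ (hcon j)
  exact h1 isUnit_one

lemma el_YY (hn : 3 ≤ n) (j k : Fin n) (hjk : j ≠ k) (a : A) (e : ℤ)
    (h : e < 0 → ¬ IsUnit a) :
    el j k hjk (((tt ^ e : (LL A)ˣ) : LL A) * ios (PowerSeries.C a)) ∈ YY A hn := by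
  by_cases he : e < 0
  · refine ⟨_, ?_, 1, one_mem _, (mul_one _).symm⟩
    obtain ⟨m, rfl⟩ : ∃ m : ℕ, e = -(m : ℤ) := ⟨e.natAbs, by omega⟩
    rw [tt_zpow_neg, ← map_mul, ← glMap_el]
    refine Subgroup.mem_map_of_mem _ (MonoidHom.mem_ker.2 ?_)
    have ha : IsLocalRing.residue A a = 0 := by
      rw [IsLocalRing.residue_eq_zero_iff]; exact h he
    rw [glMap_el, map_mul, rh_C, ha, map_zero, mul_zero]
    apply Units.ext
    rw [el_val, transvection_zero]; rfl
  · refine ⟨1, one_mem _, _, ?_, (one_mul _).symm⟩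
    obtain ⟨m, rfl⟩ : ∃ m : ℕ, e = (m : ℤ) := ⟨e.natAbs, by omega⟩
    rw [tt_zpow_nat, ← ph_C, ← map_mul, ← glMap_el]
    exact Subgroup.mem_map_of_mem _ (el_mem _ _ _ _)

lemma tau_step (hn : 3 ≤ n) (i : Fin n) (c : GL (Fin n) (PowerSeries A)) (d : Fin n → ℤ) :
    td (Pi.single i 1) * (glMap ios c * td d) ∈ ZZ A hn := by
  classical
  set c0 := glMap PowerSeries.constantCoeff c with hc0
  obtain ⟨j, hj, hmin⟩ : ∃ j, IsUnit (c0 i j) ∧ ∀ k, IsUnit (c0 i k) → d j ≤ d k := by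
    obtain ⟨j0, hj0⟩ := exists_unit_entry c0 i
    obtain ⟨j, hj, hm⟩ := Finset.exists_min_image
      (Finset.univ.filter fun k => IsUnit (c0 i k)) d ⟨j0, by simp [hj0]⟩
    exact ⟨j, (Finset.mem_filter.1 hj).2, fun k hk => hm k (by simp [hk])⟩
  obtain ⟨v, hv⟩ := hj.exists_right_inv
  set f : Fin n → A := fun k => if k = j then 0 else c0 i k * v with hf
  have hfj : f j = 0 := by simp [hf]
  obtain ⟨-, F, hF, hFv⟩ := row_mem (elemGL n A) j f hfj (fun k hk => el_mem _ _ _ _)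
  have hrow : ∀ k, c0 i k = c0 i j * F j k := by
    intro k
    rw [hFv, Matrix.add_apply, Matrix.vecMulVec_apply, Pi.single_eq_same, one_mul, Matrix.one_apply]
    by_cases hk : k = j
    · rw [hk, if_pos rfl, hfj, add_zero, mul_one]
    · rw [if_neg (Ne.symm hk), zero_add, hf]
      simp only [if_neg hk]
      linear_combination -c0 i k * hv
  set c1 := c * (glMap PowerSeries.C F)⁻¹ with hc1
  have hc1row : ∀ l, l ≠ j → PowerSeries.constantCoeff (c1 i l) = 0 := by
    intro l hl
    have e1 : glMap PowerSeries.constantCoeff c1 = c0 * F⁻¹ := by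
      have : (PowerSeries.constantCoeff (R := A)).comp PowerSeries.C = RingHom.id A := by
        ext a; simp
      rw [hc1, map_mul, map_inv, glMap_comp, this, glMap_id]
    have e2 : PowerSeries.constantCoeff (c1 i l) = (c0 * F⁻¹ : GL (Fin n) A) i l := by
      rw [← e1]; rfl
    have e3 : ((F * F⁻¹ : GL (Fin n) A) : Matrix (Fin n) (Fin n) A) j l = 0 := by
      rw [mul_inv_cancel, Units.val_one, Matrix.one_apply_ne hl.symm]
    rw [e2, Units.val_mul, Matrix.mul_apply]
    rw [Units.val_mul, Matrix.mul_apply] at e3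
    calc ∑ k, c0 i k * (F⁻¹ : GL (Fin n) A) k l
        = ∑ k, c0 i j * (F j k * (F⁻¹ : GL (Fin n) A) k l) := by
          refine Finset.sum_congr rfl fun k _ => ?_
          rw [hrow k, mul_assoc]
      _ = 0 := by rw [← Finset.mul_sum, e3, mul_zero]
  -- the new left factor
  have hM : ∃ c2 : GL (Fin n) (PowerSeries A), glMap ios c2 =
      td (Pi.single i 1) * glMap ios c1 * td (-Pi.single j 1) := by
    have hN : ∀ k l, ∃ q, (td (Pi.single i 1) * glMap ios c1 * td (-Pi.single j 1) :
        GL (Fin n) (LL A)) k l = ios q := by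
      intro k l
      rw [mul_td_apply, td_mul_apply]
      have hios : (glMap ios c1 : GL (Fin n) (LL A)) k l = ios (c1 k l) := rfl
      rw [hios]
      have hy : ((tt ^ (-1 : ℤ) : (LL A)ˣ) : LL A) = ios PowerSeries.X := by
        simpa using tt_zpow_neg (R := A) 1
      have ht := tt_mul_ios (R := A)
      by_cases hk : k = i
      · subst hk
        rw [Pi.single_eq_same, zpow_one]
        by_cases hl : l = j
        · subst hl
          rw [Pi.neg_apply, Pi.single_eq_same, hy]
          exact ⟨c1 k l, by linear_combination ios (c1 k l) * ht⟩
        · rw [Pi.neg_apply, Pi.single_eq_of_ne hl, neg_zero, zpow_zero, Units.val_one, mul_one]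
          obtain ⟨q, hq⟩ := PowerSeries.X_dvd_iff.2 (hc1row l hl)
          rw [hq, map_mul, ← mul_assoc, ht, one_mul]
          exact ⟨q, rfl⟩
      · rw [Pi.single_eq_of_ne hk, zpow_zero, Units.val_one, one_mul]
        by_cases hl : l = j
        · subst hl
          rw [Pi.neg_apply, Pi.single_eq_same, hy, ← map_mul]
          exact ⟨_, rfl⟩
        · rw [Pi.neg_apply, Pi.single_eq_of_ne hl, neg_zero, zpow_zero, Units.val_one, mul_one]
          exact ⟨_, rfl⟩
    choose N hN using hN
    obtain ⟨c2, -, h2⟩ := lift_gl _ N hN c1.val.det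
      ((Matrix.isUnit_iff_isUnit_det _).1 c1.isUnit) (det_conj_td _ _ (by simp) c1)
    exact ⟨c2, h2⟩
  obtain ⟨c2, hc2⟩ := hM
  have hw : td (-d) * glMap ios (glMap PowerSeries.C F) * td d ∈ YY A hn := by
    obtain ⟨-, x, hx, hxv⟩ := row_mem (YY A hn) j
      (fun k => ((tt ^ (d k - d j) : (LL A)ˣ) : LL A) * ios (PowerSeries.C (f k)))
      (by simp [hfj])
      (fun k hjk => el_YY hn j k hjk (f k) _ (by
        intro hlt hu
        have hk : k ≠ j := hjk.symm
        rw [hf] at hu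
        simp only [if_neg hk] at hu
        have := hmin k (isUnit_of_mul_isUnit_left hu)
        omega))
    have : td (-d) * glMap ios (glMap PowerSeries.C F) * td d = x := by
      apply Units.ext
      ext1 k l
      rw [mul_td_apply, td_mul_apply, hxv]
      have e1 : (glMap ios (glMap PowerSeries.C F) : GL (Fin n) (LL A)) k l =
        ios (PowerSeries.C (F k l)) := rfl
      rw [e1, hFv, Matrix.add_apply, Matrix.add_apply, Matrix.vecMulVec_apply,
        Matrix.vecMulVec_apply, Pi.single_apply, Pi.single_apply, Matrix.one_apply, Matrix.one_apply,
        Pi.neg_apply, mul_right_comm, ← Units.val_mul, ← _root_.zpow_add]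
      by_cases hkj : k = j
      · rw [if_pos hkj, if_pos hkj, one_mul, one_mul, map_add, map_add, mul_add, hkj,
          neg_add_eq_sub]
        congr 1
        by_cases hl : j = l
        · simp [hl]
        · simp [hl]
      · rw [if_neg hkj, if_neg hkj, zero_mul, zero_mul, add_zero, add_zero]
        by_cases hl : k = l
        · simp [hl]
        · simp [hl]
    rw [this]; exact hx
  refine ⟨c2, Pi.single j 1 + d, _, hw, ?_⟩
  rw [hc2, td_add, td_neg, td_neg, hc1, map_mul (glMap (ios (R := A))), map_inv]
  group

lemma ZZ_mul (hn : 3 ≤ n) (z w : GL (Fin n) (LL A)) (hz : z ∈ ZZ A hn) (hw : w ∈ YY A hn) :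
    z * w ∈ ZZ A hn := by
  obtain ⟨c, d, w', hw', rfl⟩ := hz
  exact ⟨c, d, w' * w, mul_mem hw' hw, by rw [mul_assoc]⟩

lemma ios_ZZ (hn : 3 ≤ n) (c : GL (Fin n) (PowerSeries A)) (z : GL (Fin n) (LL A))
    (hz : z ∈ ZZ A hn) : glMap ios c * z ∈ ZZ A hn := by
  obtain ⟨c', d, w', hw', rfl⟩ := hz
  exact ⟨c * c', d, w', hw', by rw [map_mul]; group⟩

lemma td_const_comm (k : ℤ) (z : GL (Fin n) (LL R)) :
    td (fun _ => k) * z = z * td (fun _ => k) := by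
  apply Units.ext
  ext1 a b
  rw [td_mul_apply, mul_td_apply, mul_comm]

/-- Exponents preserving the set of products. -/
def SS (A : Type*) [CommRing A] [IsLocalRing A] (hn : 3 ≤ n) : AddSubmonoid (Fin n → ℤ) where
  carrier := {d | ∀ z ∈ ZZ A hn, td d * z ∈ ZZ A hn}
  zero_mem' := by intro z hz; rw [td_zero, one_mul]; exact hz
  add_mem' := by
    intro d e hd he z hz
    rw [td_add, mul_assoc]
    exact hd _ (he _ hz)

lemma single_SS (hn : 3 ≤ n) (i : Fin n) (m : ℤ) : Pi.single i m ∈ SS A hn := by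
  have h1 : ∀ i, Pi.single i 1 ∈ SS A hn := by
    rintro i _ ⟨c, d, w, hw, rfl⟩
    rw [← mul_assoc]
    exact ZZ_mul hn _ _ (tau_step hn i c d) hw
  have h2 : (fun _ => -1) ∈ SS A hn := by
    rintro _ ⟨c, d, w, hw, rfl⟩
    refine ⟨c, (fun _ => -1) + d, w, hw, ?_⟩
    rw [td_add, ← mul_assoc, ← mul_assoc, ← mul_assoc, td_const_comm]
  have h3 : ∀ i, Pi.single i (-1) ∈ SS A hn := by
    intro i
    have : (Pi.single i (-1) : Fin n → ℤ) =
        (fun _ => -1) + ∑ j ∈ Finset.univ.erase i, Pi.single j 1 := by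
      have h4 : ∑ j : Fin n, (Pi.single j 1 : Fin n → ℤ) = fun _ => 1 :=
        Finset.univ_sum_single (fun _ => (1 : ℤ))
      rw [← Finset.add_sum_erase _ _ (Finset.mem_univ i)] at h4
      have h5 : (Pi.single i (-1) : Fin n → ℤ) = -Pi.single i 1 := Pi.single_neg _ _
      have h6 : (fun _ => -1 : Fin n → ℤ) = -(fun _ => 1) := rfl
      rw [h5, h6, ← h4]
      abel
    rw [this]
    exact add_mem h2 (sum_mem fun j _ => h1 j)
  rcases le_total 0 m with hm | hm
  · obtain ⟨k, rfl⟩ : ∃ k : ℕ, m = k := ⟨m.natAbs, by omega⟩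
    have : (Pi.single i (k : ℤ) : Fin n → ℤ) = k • Pi.single i 1 := by
      rw [← Pi.single_smul]; simp
    rw [this]; exact nsmul_mem (h1 i) k
  · obtain ⟨k, rfl⟩ : ∃ k : ℕ, m = -(k : ℤ) := ⟨m.natAbs, by omega⟩
    have : (Pi.single i (-(k : ℤ)) : Fin n → ℤ) = k • Pi.single i (-1) := by
      rw [← Pi.single_smul]; simp
    rw [this]; exact nsmul_mem (h3 i) k

lemma elem_ZZ (hn : 3 ≤ n) (x : GL (Fin n) (LL A)) (hx : x ∈ elemGL n (LL A)) : x ∈ ZZ A hn := by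
  refine elem_induction_left (p := fun x => x ∈ ZZ A hn) ?_ ?_ hx
  · exact ⟨1, 0, 1, one_mem _, by rw [td_zero]; simp⟩
  · intro i j hij b x _ hx
    obtain ⟨k, p, rfl⟩ := LL_surj b
    have : el i j hij (((tt : (LL A)ˣ) : LL A) ^ k * ios p) =
        td (Pi.single i (k : ℤ)) * glMap ios (el i j hij p) * td (Pi.single i (-(k : ℤ))) := by
      have h5 : (Pi.single i (-(k : ℤ)) : Fin n → ℤ) = -Pi.single i (k : ℤ) := Pi.single_neg _ _
      rw [h5, td_neg, eq_mul_inv_iff_mul_eq, glMap_el]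
      apply Units.ext
      ext1 a b
      rw [mul_td_apply, td_mul_apply, el_val, el_val, transvection, transvection,
        Matrix.add_apply, Matrix.add_apply, Matrix.single_apply, Matrix.single_apply,
        Matrix.one_apply]
      by_cases ha : i = a
      · subst ha
        by_cases hb : j = b
        · subst hb
          simp [hij, Pi.single_apply, hij.symm]
        · by_cases hib : i = b
          · subst hib; simp [hb]
          · simp [hb, hib]
      · by_cases hb : a = b
        · subst hb; simp [ha, Pi.single_apply, Ne.symm ha]
        · simp [ha, hb]
    rw [this, mul_assoc, mul_assoc]
    exact single_SS hn _ _ _ (ios_ZZ hn _ _ (single_SS hn _ _ _ hx))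

end LocalB

section LocalC

variable {A : Type*} [CommRing A] [IsLocalRing A]

lemma gl_not_zero [Nontrivial R] (G : GL (Fin n) R) (i : Fin n) (h : ∀ k, G k i = 0) : False := by
  have : ((G⁻¹ * G : GL (Fin n) R) : Matrix (Fin n) (Fin n) R) i i = 1 := by
    rw [inv_mul_cancel, Units.val_one, Matrix.one_apply_eq]
  rw [Units.val_mul, Matrix.mul_apply] at this
  simp [h] at this

lemma gl_not_zero' [Nontrivial R] (G : GL (Fin n) R) (i : Fin n) (h : ∀ k, G i k = 0) : False := by
  have : ((G * G⁻¹ : GL (Fin n) R) : Matrix (Fin n) (Fin n) R) i i = 1 := by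
    rw [mul_inv_cancel, Units.val_one, Matrix.one_apply_eq]
  rw [Units.val_mul, Matrix.mul_apply] at this
  simp [h] at this

lemma exps_zero [Nontrivial R] (G : GL (Fin n) (Polynomial R)) (c : GL (Fin n) (PowerSeries R))
    (d : Fin n → ℤ) (h : glMap ph G = glMap ios c * td d) : d = 0 := by
  ext i
  rw [Pi.zero_apply]
  by_contra hne
  rcases lt_or_gt_of_ne hne with hlt | hlt
  · obtain ⟨m, hm⟩ : ∃ m : ℕ, d i = -(m : ℤ) := ⟨(d i).natAbs, by omega⟩
    refine gl_not_zero G i fun k => ?_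
    refine zero_of_ph _ (c k i) m (by omega) ?_
    have e1 : ph (G k i) = (glMap ph G : GL (Fin n) (LL R)) k i := rfl
    have e2 : (glMap ios c : GL (Fin n) (LL R)) k i = ios (c k i) := rfl
    rw [e1, h, mul_td_apply, hm, tt_zpow_neg, e2, ← map_mul, mul_comm]
  · obtain ⟨m, hm⟩ : ∃ m : ℕ, d i = (m : ℤ) := ⟨(d i).natAbs, by omega⟩
    refine gl_not_zero' G⁻¹ i fun k => ?_
    refine zero_of_ph _ ((c⁻¹ : GL (Fin n) (PowerSeries R)) i k) m (by omega) ?_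
    have e1 : ph ((G⁻¹ : GL (Fin n) (Polynomial R)) i k) =
      (glMap ph G⁻¹ : GL (Fin n) (LL R)) i k := rfl
    have e2 : (glMap ios c⁻¹ : GL (Fin n) (LL R)) i k =
      ios ((c⁻¹ : GL (Fin n) (PowerSeries R)) i k) := rfl
    rw [e1, map_inv, h, _root_.mul_inv_rev, ← td_neg, ← map_inv, td_mul_apply, Pi.neg_apply, hm,
      tt_zpow_neg, e2, ← map_mul]

lemma LLmap_td (f : R →+* S) (d : Fin n → ℤ) : glMap (LLmap f) (td d) = td d := by
  have hu : Units.map (LLmap f).toMonoidHom tt = tt := Units.ext (LLmap_tt f)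
  apply Units.ext
  rw [glMap_val, td_val, td_val, Matrix.diagonal_map (map_zero _)]
  congr 1
  ext i
  have : Units.map (LLmap f).toMonoidHom (tt ^ d i) = tt ^ d i := by rw [map_zpow, hu]
  exact congrArg Units.val this

lemma local_thm (hn : 3 ≤ n) (g : GL (Fin n) (Polynomial A)) (h0 : glMap ev0 g = 1)
    (h : glMap ph g ∈ elemGL n (LL A)) : g ∈ elemGL n (Polynomial A) := by
  obtain ⟨c, d, w, ⟨p, ⟨P, hP, rfl⟩, e, ⟨x, hx, rfl⟩, rfl⟩, hg⟩ := elem_ZZ hn _ h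
  rw [SetLike.mem_coe, MonoidHom.mem_ker] at hP
  have hG : glMap ph (g * x⁻¹) = glMap ios c * td d * glMap ios P := by
    rw [map_mul, map_inv, hg]; group
  obtain ⟨G, hGdef⟩ : ∃ G, G = g * x⁻¹ := ⟨_, rfl⟩
  rw [← hGdef] at hG
  have hd : d = 0 := by
    refine exps_zero (glMap (Polynomial.mapRingHom (IsLocalRing.residue A)) G) (glMap rh c) d ?_
    have e1 := congrArg (glMap (LLmap (IsLocalRing.residue A))) hG
    have e2 : (LLmap (IsLocalRing.residue A)).comp ios = ios.comp rh :=
      RingHom.ext fun q => LLmap_ios _ q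
    rw [map_mul, map_mul, LLmap_td, glMap_comp, glMap_comp, glMap_comp, LLmap_ph, e2, ← glMap_comp,
      ← glMap_comp, ← glMap_comp, hP, map_one, mul_one] at e1
    exact e1
  rw [hd, td_zero, mul_one, ← map_mul] at hG
  have hconst : G = glMap Polynomial.C (glMap ev0 G) := by
    apply Units.ext
    ext1 k l
    have e1 : ph (G k l) = ios ((c * P : GL (Fin n) (PowerSeries A)) k l) :=
      congrArg (fun z : GL (Fin n) (LL A) => z k l) hG
    have e2 := Polynomial.eq_C_of_natDegree_eq_zero (const_of_ph _ _ e1)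
    rw [Polynomial.coeff_zero_eq_eval_zero] at e2
    exact e2
  have hG0 : glMap ev0 G = (glMap ev0 x)⁻¹ := by
    rw [hGdef, map_mul, map_inv, h0, one_mul]
  have : g = G * x := by rw [hGdef]; group
  rw [this, hconst, hG0]
  exact mul_mem (elem_map _ (inv_mem (elem_map _ hx))) hx

end LocalC

lemma main_thm (hn : 3 ≤ n) (h : Polynomial R) (hmonic : h.Monic)
    (g : GL (Fin n) (Polynomial R))
    (hloc : glMap (algebraMap (Polynomial R) (Localization.Away h)) g ∈
      elemGL n (Localization.Away h))
    (h0 : glMap ev0 g = 1) : g ∈ elemGL n (Polynomial R) := by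
  refine local_global hn g h0 fun m hm => ?_
  set f := algebraMap R (Localization.AtPrime m) with hf
  have hev : (ev0 : Polynomial (Localization.AtPrime m) →+* _).comp (Polynomial.mapRingHom f) =
      f.comp ev0 := by
    apply Polynomial.ringHom_ext
    · intro a; simp [ev0_apply]
    · simp [ev0_apply]
  refine local_thm hn _ (by rw [glMap_comp, hev, ← glMap_comp, h0, map_one]) ?_
  have hu : IsUnit ((ph.comp (Polynomial.mapRingHom f)) h) := by
    rw [RingHom.comp_apply]
    exact ph_monic _ (hmonic.map f)
  have e : (IsLocalization.Away.lift (S := Localization.Away h) h hu).comp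
      (algebraMap (Polynomial R) (Localization.Away h)) = ph.comp (Polynomial.mapRingHom f) :=
    IsLocalization.Away.lift_comp h hu
  rw [glMap_comp, ← e, ← glMap_comp]
  exact elem_map _ hloc

end MonicLoc

/-- If `h ∈ A[x]` is monic with `h(1) ∈ A^×`, and `g ∈ GL_n(A[x])` becomes elementary over
`A[x]_h` and satisfies `g(0) = 1`, then `g ∈ E_n(A[x])`, and in particular
`g(1) ∈ E_n(A)`. -/
theorem monic_localization_with_evaluation (n : ℕ) (hn : 3 ≤ n) (A : Type*) [CommRing A]
    (h : Polynomial A) (hmonic : h.Monic) (hunit : IsUnit (h.eval 1))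
    (g : GL (Fin n) (Polynomial A))
    (hloc : glMap (algebraMap (Polynomial A) (Localization.Away h)) g ∈
      elemGL n (Localization.Away h))
    (h0 : glMap (Polynomial.evalRingHom (0 : A)) g = 1) :
    g ∈ elemGL n (Polynomial A) ∧ glMap (Polynomial.evalRingHom (1 : A)) g ∈ elemGL n A := by
  have h1 := MonicLoc.main_thm hn h hmonic g hloc h0
  exact ⟨h1, MonicLoc.elem_map _ h1⟩
end
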